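/- (Theorem 1: individual-delay-reflected consensus criterion.) Consider the multi-agent system of m ≥ 2 agents x_k : ℝ → ℝ^n with ẋ_k(t) = A x_k(t) + B u_k(t−τ_k(t)), u_k(t) = −Σ_{l≠k} a_{kl} K (x_k(t) − x_l(t)), where each delay τ_k : ℝ → ℝ is continuous with 0 ≤ τ_k^l ≤ τ_k(t) ≤ τ_k^u; equivalently, the stacked error state z(t) = (G⊗I_n)x(t) ∈ ℝ^F satisfies ż(t) = Ā z(t) − Σ_{k=1}^m B̄_k z(t−τ_k(t)). Suppose there exist, for each k = 1,…,m: symmetric positive definite matrices P_k ∈ ℝ^{3F×3F}, Q_{1k}, Q_{2k} ∈ ℝ^{F×F}, R_{1k}, R_{2k} ∈ ℝ^{2F×2F}, symmetric matrices W_{1k}, W_{2k}, W_{3k} ∈ ℝ^{F×F}, and arbitrary matrices Y_{ikj} ∈ ℝ^{(1+(3+3N)m)F×F} (i = 1,2,3; j = 1,…,2N+1), such that (a) R_{1k} + W̄_{1k} ≻ 0, R_{2k} + W̄_{2k} ≻ 0, R_{2k} + W̄_{3k} ≻ 0 for all k, and (b) for every choice of delay values (τ_1(t),…,τ_m(t))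 with each τ_k(t) ∈ {τ_k^l, τ_k^u} (i.e., at all 2^m vertices), the symmetric block matrix [[Π̄, X̄_1, X̄_{23}],[X̄_1ᵀ, −RW̄_1, 0],[X̄_{23}ᵀ, 0, −RW̄_{23}]] is negative definite, where Π̄, X̄_1, X̄_{23}, RW̄_1, RW̄_{23} are defined from A, B, K, L, the delay bounds, and the decision matrices by the explicit formulas in the context. Then the multi-agent system achieves consensus: for all agents i, j, x_i(t) − x_j(t) → 0 as t → ∞ (equivalently z(t) → 0). -/

import Mathlib

open Matrix Kronecker

/-! Formalization of Theorem 1 (individual-delay-reflected consensus criterion) for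
multi-agent systems with heterogeneous time-varying delays.

Notation: `m` agents with `n`-dimensional states, `F = n(m−1)`; the agent-difference
(error) state space `ℝ^F` is indexed by `ag m n = Fin (m-1) × Fin n`, the augmented space
`ℝ^{(1+(3+3N)m)F}` by `bg m n N`, and the `(2N+2)F`-dimensional column space of the block
matrices `Ȳ_{ik}`, `M̄_{xk}` (matching the block-diagonal structure of
`ℐ_N ⊗ (2F×2F matrix)`) by `kp m n N = Fin (N+1) × (ag m n ⊕ ag m n)`.
Paper blocks are 1-based: paper agent index `k ∈ {1,…,m}` is `(k : Fin m)` with paper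
value `(k:ℕ)+1`, and `eB f` is the paper's block selector `e_f`. -/

abbrev ag (m n : ℕ) := Fin (m - 1) × Fin n
abbrev bg (m n N : ℕ) := Fin (1 + (3 + 3 * N) * m) × ag m n
abbrev kp (m n N : ℕ) := Fin (N + 1) × (ag m n ⊕ ag m n)

/-- Block selector matrix `e_f ∈ ℝ^{(1+(3+3N)m)F × F}` (1-based block index `f`). -/
def eB (m n N : ℕ) (f : ℕ) : Matrix (bg m n N) (ag m n) ℝ := fun p j =>
  if (p.1 : ℕ) + 1 = f ∧ p.2 = j then 1 else 0

/-- `Sym(X) = X + Xᵀ`. -/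
def symM {α : Type*} (X : Matrix α α ℝ) : Matrix α α ℝ := X + Xᵀ

/-- Tree-type transformation matrix `G = [1_{m−1} | −I_{m−1}]`. -/
def Gm (m : ℕ) : Matrix (Fin (m - 1)) (Fin m) ℝ := fun i j =>
  if (j : ℕ) = 0 then 1 else if (j : ℕ) = (i : ℕ) + 1 then -1 else 0

/-- `U = [0_{m−1} | −I_{m−1}]ᵀ`. -/
def Um (m : ℕ) : Matrix (Fin m) (Fin (m - 1)) ℝ := fun i j =>
  if (i : ℕ) = (j : ℕ) + 1 then -1 else 0

/-- `E_k`: a single `1` at entry `(k,k)`. -/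
def Em (m : ℕ) (k : Fin m) : Matrix (Fin m) (Fin m) ℝ := fun i j =>
  if i = k ∧ j = k then 1 else 0

/-- Graph Laplacian built from the adjacency weights:
`l_{kl} = −a_{kl}` for `k ≠ l`, `l_{kk} = Σ_{l≠k} a_{kl}`. -/
def Lap (m : ℕ) (adj : Fin m → Fin m → ℝ) : Matrix (Fin m) (Fin m) ℝ := fun k l =>
  if k = l then ∑ l' ∈ Finset.univ.erase k, adj k l' else -(adj k l)

/-- `Ā = I_{m−1} ⊗ A`. -/
def Abar (m n : ℕ) (A : Matrix (Fin n) (Fin n) ℝ) : Matrix (ag m n) (ag m n) ℝ :=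
  (1 : Matrix (Fin (m - 1)) (Fin (m - 1)) ℝ) ⊗ₖ A

/-- `B̄_k = G E_k L U ⊗ (BK)`. -/
def Bbar (m n r : ℕ) (adj : Fin m → Fin m → ℝ) (B : Matrix (Fin n) (Fin r) ℝ)
    (K : Matrix (Fin r) (Fin n) ℝ) (k : Fin m) : Matrix (ag m n) (ag m n) ℝ :=
  (Gm m * Em m k * Lap m adj * Um m) ⊗ₖ (B * K)

/-- The row `e_1Āᵀ − Σ_{k'} e_{1+2m+k'} B̄_{k'}ᵀ` mapping `ζ(t)` to `ż(t)`. -/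
def dynRow (m n r N : ℕ) (A : Matrix (Fin n) (Fin n) ℝ) (adj : Fin m → Fin m → ℝ)
    (B : Matrix (Fin n) (Fin r) ℝ) (K : Matrix (Fin r) (Fin n) ℝ) :
    Matrix (bg m n N) (ag m n) ℝ :=
  eB m n N 1 * (Abar m n A)ᵀ
    - ∑ k : Fin m, eB m n N (2 * m + (k : ℕ) + 2) * (Bbar m n r adj B K k)ᵀ

/-- `Π_{1k} = [e_1, τ_k^l e_{1+3m+k}, (τ_k(t)−τ_k^l)e_{1+(3+N)m+k} + (τ_k^u−τ_k(t))e_{1+(3+2N)m+k}]`. -/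
def Pi1 (m n N : ℕ) (τl τu τv : Fin m → ℝ) (k : Fin m) :
    Matrix (bg m n N) (Fin 3 × ag m n) ℝ := fun p c =>
  if c.1 = 0 then eB m n N 1 p c.2
  else if c.1 = 1 then τl k * eB m n N (3 * m + (k : ℕ) + 2) p c.2
  else (τv k - τl k) * eB m n N ((3 + N) * m + (k : ℕ) + 2) p c.2
        + (τu k - τv k) * eB m n N ((3 + 2 * N) * m + (k : ℕ) + 2) p c.2

/-- `Π_{2k} = [e_1Āᵀ − Σ_{k'} e_{1+2m+k'}B̄_{k'}ᵀ, e_1 − e_{1+k}, e_{1+k} − e_{1+m+k}]`. -/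
def Pi2 (m n r N : ℕ) (A : Matrix (Fin n) (Fin n) ℝ) (adj : Fin m → Fin m → ℝ)
    (B : Matrix (Fin n) (Fin r) ℝ) (K : Matrix (Fin r) (Fin n) ℝ) (k : Fin m) :
    Matrix (bg m n N) (Fin 3 × ag m n) ℝ := fun p c =>
  if c.1 = 0 then dynRow m n r N A adj B K p c.2
  else if c.1 = 1 then (eB m n N 1 - eB m n N ((k : ℕ) + 2)) p c.2
  else (eB m n N ((k : ℕ) + 2) - eB m n N (m + (k : ℕ) + 2)) p c.2

/-- `Π_3 = [e_1Āᵀ − Σ_k e_{1+2m+k}B̄_kᵀ, e_1]`. -/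
def Pi3 (m n r N : ℕ) (A : Matrix (Fin n) (Fin n) ℝ) (adj : Fin m → Fin m → ℝ)
    (B : Matrix (Fin n) (Fin r) ℝ) (K : Matrix (Fin r) (Fin n) ℝ) :
    Matrix (bg m n N) (ag m n ⊕ ag m n) ℝ := fun p c =>
  Sum.elim (dynRow m n r N A adj B K p) (eB m n N 1 p) c

/-- `W̄ = [[0, W],[W, 0]] ∈ ℝ^{2F×2F}`. -/
def Wb (m n : ℕ) (W : Matrix (ag m n) (ag m n) ℝ) :
    Matrix (ag m n ⊕ ag m n) (ag m n ⊕ ag m n) ℝ := fun p q =>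
  match p, q with
  | Sum.inl i, Sum.inr j => W i j
  | Sum.inr i, Sum.inl j => W i j
  | _, _ => 0

/-- `γ_{ij} = (−1)^{j−1}(−1)^i C(j−1,i) C(j+i−1,i)`. -/
def gam (i j : ℕ) : ℝ :=
  (-1 : ℝ) ^ (j - 1) * ((-1 : ℝ) ^ i * ((j - 1).choose i : ℝ) * ((j + i - 1).choose i : ℝ))

/-- `ρ_i^{xk}` for `x = 1,2,3` (here `x : Fin 3`, 0-based). -/
def rho (m n N : ℕ) (x : Fin 3) (k : Fin m) (i : ℕ) : Matrix (bg m n N) (ag m n) ℝ :=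
  if x = 0 then
    (if i = 0 then eB m n N 1 - eB m n N ((k : ℕ) + 2)
     else eB m n N 1 - (i : ℝ) • eB m n N ((2 + i) * m + (k : ℕ) + 2))
  else if x = 1 then
    (if i = 0 then eB m n N ((k : ℕ) + 2) - eB m n N (2 * m + (k : ℕ) + 2)
     else eB m n N ((k : ℕ) + 2) - (i : ℝ) • eB m n N ((2 + i + N) * m + (k : ℕ) + 2))
  else
    (if i = 0 then eB m n N (2 * m + (k : ℕ) + 2) - eB m n N (m + (k : ℕ) + 2)
     else eB m n N (2 * m + (k : ℕ) + 2) - (i : ℝ) • eB m n N ((2 + i + 2 * N) * m + (k : ℕ) + 2))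

/-- The scalar coefficient of the even moment matrices:
`τ_k^l`, `τ_k(t)−τ_k^l`, `τ_k^u−τ_k(t)` for `x = 1,2,3`. -/
def coefM (m : ℕ) (τl τu τv : Fin m → ℝ) (x : Fin 3) (k : Fin m) : ℝ :=
  if x = 0 then τl k else if x = 1 then τv k - τl k else τu k - τv k

/-- Iterated-integral block selectors `e_{1+(3+i)m+k}`, `e_{1+(3+i+N)m+k}`, `e_{1+(3+i+2N)m+k}`. -/
def eEven (m n N : ℕ) (x : Fin 3) (k : Fin m) (i : ℕ) : Matrix (bg m n N) (ag m n) ℝ :=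
  if x = 0 then eB m n N ((3 + i) * m + (k : ℕ) + 2)
  else if x = 1 then eB m n N ((3 + i + N) * m + (k : ℕ) + 2)
  else eB m n N ((3 + i + 2 * N) * m + (k : ℕ) + 2)

/-- Odd moment matrix `M_{2j−1}^{xk} = Σ_{i=0}^{j−1} γ_{ij} ρ_i^{xk}`. -/
def Modd (m n N : ℕ) (x : Fin 3) (k : Fin m) (j : ℕ) : Matrix (bg m n N) (ag m n) ℝ :=
  ∑ i ∈ Finset.range j, gam i j • rho m n N x k i

/-- Even moment matrix `M_{2j}^{xk} = coef ⋅ Σ_{i=0}^{j−1} γ_{ij} e_{…}`. -/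
def Meven (m n N : ℕ) (τl τu τv : Fin m → ℝ) (x : Fin 3) (k : Fin m) (j : ℕ) :
    Matrix (bg m n N) (ag m n) ℝ :=
  coefM m τl τu τv x k • ∑ i ∈ Finset.range j, gam i j • eEven m n N x k i

/-- `M̄_{xk} = [M_1^{xk} ⋯ M_{2N+1}^{xk} 0]`, the `jb`-th `2F`-block holding the pair
`(M_{2jb+1}, M_{2jb+2})` (1-based positions), with the final even slot zero. -/
def Mb (m n N : ℕ) (τl τu τv : Fin m → ℝ) (x : Fin 3) (k : Fin m) :
    Matrix (bg m n N) (kp m n N) ℝ := fun p c =>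
  match c.2 with
  | Sum.inl jj => Modd m n N x k ((c.1 : ℕ) + 1) p jj
  | Sum.inr jj => if (c.1 : ℕ) < N then Meven m n N τl τu τv x k ((c.1 : ℕ) + 1) p jj else 0

/-- `Ȳ_{xk} = [Y_{xk1} ⋯ Y_{xk(2N+1)} 0]`, with the same `2F`-block interleaving. -/
def Yb (m n N : ℕ) (Y : Fin 3 → Fin m → Fin (2 * N + 1) → Matrix (bg m n N) (ag m n) ℝ)
    (x : Fin 3) (k : Fin m) : Matrix (bg m n N) (kp m n N) ℝ := fun p c =>
  match c.2 with
  | Sum.inl jj => Y x k ⟨2 * (c.1 : ℕ), by have := c.1.isLt; omega⟩ p jj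
  | Sum.inr jj =>
      if h : 2 * (c.1 : ℕ) + 1 < 2 * N + 1 then Y x k ⟨2 * (c.1 : ℕ) + 1, h⟩ p jj else 0

/-- `Π̄`: the `(1,1)`-block of the LMI of Theorem 1. -/
def PibarT (m n r N : ℕ) (A : Matrix (Fin n) (Fin n) ℝ) (adj : Fin m → Fin m → ℝ)
    (B : Matrix (Fin n) (Fin r) ℝ) (K : Matrix (Fin r) (Fin n) ℝ)
    (τl τu τv : Fin m → ℝ)
    (P : Fin m → Matrix (Fin 3 × ag m n) (Fin 3 × ag m n) ℝ)
    (Q1 Q2 : Fin m → Matrix (ag m n) (ag m n) ℝ)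
    (R1 R2 : Fin m → Matrix (ag m n ⊕ ag m n) (ag m n ⊕ ag m n) ℝ)
    (W1 W2 W3 : Fin m → Matrix (ag m n) (ag m n) ℝ)
    (Y : Fin 3 → Fin m → Fin (2 * N + 1) → Matrix (bg m n N) (ag m n) ℝ) :
    Matrix (bg m n N) (bg m n N) ℝ :=
  ∑ k : Fin m,
    (symM (Pi2 m n r N A adj B K k * P k * (Pi1 m n N τl τu τv k)ᵀ)
      + eB m n N 1 * (Q1 k + W1 k) * (eB m n N 1)ᵀ
      + eB m n N ((k : ℕ) + 2) * (Q2 k - Q1 k + W2 k - W1 k) * (eB m n N ((k : ℕ) + 2))ᵀ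
      + eB m n N (2 * m + (k : ℕ) + 2) * (W3 k - W2 k) * (eB m n N (2 * m + (k : ℕ) + 2))ᵀ
      - eB m n N (m + (k : ℕ) + 2) * (Q2 k + W3 k) * (eB m n N (m + (k : ℕ) + 2))ᵀ
      + Pi3 m n r N A adj B K * (τl k • R1 k + (τu k - τl k) • R2 k) * (Pi3 m n r N A adj B K)ᵀ
      + symM (Yb m n N Y 0 k * (Mb m n N τl τu τv 0 k)ᵀ
          + Yb m n N Y 1 k * (Mb m n N τl τu τv 1 k)ᵀ
          + Yb m n N Y 2 k * (Mb m n N τl τu τv 2 k)ᵀ))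

/-- `X̄_1 = [τ_1^l Ȳ_{11}, …, τ_m^l Ȳ_{1m}]`. -/
def X1b (m n N : ℕ) (τl : Fin m → ℝ)
    (Y : Fin 3 → Fin m → Fin (2 * N + 1) → Matrix (bg m n N) (ag m n) ℝ) :
    Matrix (bg m n N) (Fin m × kp m n N) ℝ := fun p c =>
  τl c.1 * Yb m n N Y 0 c.1 p c.2

/-- `X̄_{23} = [(τ_k(t)−τ_k^l)Ȳ_{2k} + (τ_k^u−τ_k(t))Ȳ_{3k}]_{k=1,…,m}`. -/
def X23b (m n N : ℕ) (τl τu τv : Fin m → ℝ)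
    (Y : Fin 3 → Fin m → Fin (2 * N + 1) → Matrix (bg m n N) (ag m n) ℝ) :
    Matrix (bg m n N) (Fin m × kp m n N) ℝ := fun p c =>
  (τv c.1 - τl c.1) * Yb m n N Y 1 c.1 p c.2 + (τu c.1 - τv c.1) * Yb m n N Y 2 c.1 p c.2

/-- `RW̄_1 = blockdiag_k ( τ_k^l ⋅ ℐ_N ⊗ (R_{1k} + W̄_{1k}) )`. -/
def RW1b (m n N : ℕ) (τl : Fin m → ℝ)
    (R1 : Fin m → Matrix (ag m n ⊕ ag m n) (ag m n ⊕ ag m n) ℝ)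
    (W1 : Fin m → Matrix (ag m n) (ag m n) ℝ) :
    Matrix (Fin m × kp m n N) (Fin m × kp m n N) ℝ := fun p c =>
  if p.1 = c.1 ∧ p.2.1 = c.2.1 then
    τl p.1 * ((2 * (p.2.1 : ℕ) + 1 : ℕ) : ℝ) * (R1 p.1 + Wb m n (W1 p.1)) p.2.2 c.2.2
  else 0

/-- `RW̄_{23} = blockdiag_k ( (τ_k(t)−τ_k^l)ℐ_N⊗(R_{2k}+W̄_{2k}) + (τ_k^u−τ_k(t))ℐ_N⊗(R_{2k}+W̄_{3k}) )`. -/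
def RW23b (m n N : ℕ) (τl τu τv : Fin m → ℝ)
    (R2 : Fin m → Matrix (ag m n ⊕ ag m n) (ag m n ⊕ ag m n) ℝ)
    (W2 W3 : Fin m → Matrix (ag m n) (ag m n) ℝ) :
    Matrix (Fin m × kp m n N) (Fin m × kp m n N) ℝ := fun p c =>
  if p.1 = c.1 ∧ p.2.1 = c.2.1 then
    ((2 * (p.2.1 : ℕ) + 1 : ℕ) : ℝ) *
      ((τv p.1 - τl p.1) * (R2 p.1 + Wb m n (W2 p.1)) p.2.2 c.2.2
        + (τu p.1 - τv p.1) * (R2 p.1 + Wb m n (W3 p.1)) p.2.2 c.2.2)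
  else 0

/-- The full LMI block matrix `[[Π̄, X̄_1, X̄_{23}],[∗, −RW̄_1, 0],[∗, 0, −RW̄_{23}]]` of
Theorem 1, evaluated at the delay vector `τv`. -/
def LMImat (m n r N : ℕ) (A : Matrix (Fin n) (Fin n) ℝ) (adj : Fin m → Fin m → ℝ)
    (B : Matrix (Fin n) (Fin r) ℝ) (K : Matrix (Fin r) (Fin n) ℝ)
    (τl τu τv : Fin m → ℝ)
    (P : Fin m → Matrix (Fin 3 × ag m n) (Fin 3 × ag m n) ℝ)
    (Q1 Q2 : Fin m → Matrix (ag m n) (ag m n) ℝ)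
    (R1 R2 : Fin m → Matrix (ag m n ⊕ ag m n) (ag m n ⊕ ag m n) ℝ)
    (W1 W2 W3 : Fin m → Matrix (ag m n) (ag m n) ℝ)
    (Y : Fin 3 → Fin m → Fin (2 * N + 1) → Matrix (bg m n N) (ag m n) ℝ) :
    Matrix (bg m n N ⊕ ((Fin m × kp m n N) ⊕ (Fin m × kp m n N)))
      (bg m n N ⊕ ((Fin m × kp m n N) ⊕ (Fin m × kp m n N))) ℝ :=
  Matrix.fromBlocks
    (PibarT m n r N A adj B K τl τu τv P Q1 Q2 R1 R2 W1 W2 W3 Y)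
    (Matrix.of fun p c => Sum.elim (X1b m n N τl Y p) (X23b m n N τl τu τv Y p) c)
    (Matrix.of fun p c => Sum.elim (X1b m n N τl Y c) (X23b m n N τl τu τv Y c) p)
    (Matrix.fromBlocks (-(RW1b m n N τl R1 W1)) 0 0 (-(RW23b m n N τl τu τv R2 W2 W3)))

/-- Control input `u_k(t) = −Σ_{l≠k} a_{kl} K (x_k(t) − x_l(t))`. -/
def uCtrl (m n r : ℕ) (K : Matrix (Fin r) (Fin n) ℝ) (adj : Fin m → Fin m → ℝ)
    (x : Fin m → ℝ → Fin n → ℝ) (k : Fin m) (t : ℝ) : Fin r → ℝ :=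
  -∑ l ∈ Finset.univ.erase k, adj k l • K.mulVec (x k t - x l t)

open Polynomial in
lemma leg_parts (n : ℕ) : ∀ k, k ≤ n → ∀ q : ℝ[X], derivative^[k] q = 0 →
    ∫ x in (0:ℝ)..1, (derivative^[k] ((X:ℝ[X]) ^ n * (1 - X) ^ n)).eval x * q.eval x = 0 := by
  intro k
  induction k with
  | zero => intro _ q hq; simp at hq; simp [hq]
  | succ k ih =>
    intro hk q hq
    have h := intervalIntegral.integral_mul_deriv_eq_deriv_mul_of_hasDerivAt
      (a := (0:ℝ)) (b := 1)
      (u := fun x => q.eval x) (v := fun x => (derivative^[k] ((X:ℝ[X]) ^ n * (1 - X) ^ n)).eval x)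
      (u' := fun x => (derivative q).eval x)
      (v' := fun x => (derivative^[k+1] ((X:ℝ[X]) ^ n * (1 - X) ^ n)).eval x)
      (Polynomial.continuous _).continuousOn (Polynomial.continuous _).continuousOn
      (fun x _ => Polynomial.hasDerivAt _ _)
      (fun x _ => by
        rw [Function.iterate_succ_apply']; exact Polynomial.hasDerivAt _ _)
      ((Polynomial.continuous _).intervalIntegrable _ _)
      ((Polynomial.continuous _).intervalIntegrable _ _)
    have h1 : (derivative^[k] ((X:ℝ[X]) ^ n * (1 - X) ^ n)).eval 1 = 0 := by
      have hd : (1 - X : ℝ[X]) ^ n ∣ (X:ℝ[X]) ^ n * (1 - X) ^ n := dvd_mul_left _ _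
      have := Polynomial.pow_sub_dvd_iterate_derivative_of_pow_dvd k hd
      obtain ⟨c, hc⟩ := this
      rw [hc]
      have : n - k ≠ 0 := by omega
      simp [this]
    have h0 : (derivative^[k] ((X:ℝ[X]) ^ n * (1 - X) ^ n)).eval 0 = 0 := by
      have hd : (X : ℝ[X]) ^ n ∣ (X:ℝ[X]) ^ n * (1 - X) ^ n := dvd_mul_right _ _
      have := Polynomial.pow_sub_dvd_iterate_derivative_of_pow_dvd k hd
      obtain ⟨c, hc⟩ := this
      rw [hc]
      have : n - k ≠ 0 := by omega
      simp [this]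
    have h2 := ih (by omega) (derivative q) (by rw [← Function.iterate_succ_apply]; exact hq)
    simp only [mul_comm] at h h2 ⊢
    rw [h, h2, h1, h0]; simp

open Polynomial in
noncomputable def LP (n : ℕ) : ℝ[X] := (shiftedLegendre n).map (Int.castRingHom ℝ)

open Polynomial in
lemma LP_orth (n : ℕ) (q : ℝ[X]) (hq : q.degree < n) :
    ∫ x in (0:ℝ)..1, (LP n).eval x * q.eval x = 0 := by
  have h := leg_parts n n le_rfl q (by
    by_cases h0 : q = 0
    · simp [h0]
    · apply iterate_derivative_eq_zero
      exact (natDegree_lt_iff_degree_lt h0).2 hq)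
  have e : (derivative^[n] ((X:ℝ[X]) ^ n * (1 - X) ^ n)) = (n.factorial : ℝ[X]) * LP n := by
    have := congrArg (Polynomial.map (Int.castRingHom ℝ)) (factorial_mul_shiftedLegendre_eq n)
    rw [← iterate_derivative_map] at this
    simp at this
    rw [LP, this]
  simp only [e, eval_mul, eval_natCast, mul_assoc] at h
  rw [intervalIntegral.integral_const_mul] at h
  have : (n.factorial : ℝ) ≠ 0 := by positivity
  simpa [this] using h

open Polynomial in
lemma LP_degree (n : ℕ) : (LP n).degree = n := by
  rw [LP, degree_map_eq_of_injective (RingHom.injective_int _), degree_shiftedLegendre]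

open Polynomial in
lemma LP_zero (n : ℕ) : (LP n).eval 0 = 1 := by
  rw [← coeff_zero_eq_eval_zero, LP, coeff_map, coeff_shiftedLegendre]; simp

open Polynomial in
lemma LP_one (n : ℕ) : (LP n).eval 1 = (-1) ^ n := by
  have := shiftedLegendre_eval_symm n (1:ℝ)
  have h0 := LP_zero n
  simp only [LP, eval_map, aeval_def] at *
  simp at this h0
  rw [Polynomial.eval₂_at_one]
  simp [this, h0]

open Polynomial in
lemma LP_norm (n : ℕ) :
    ∫ x in (0:ℝ)..1, (LP n).eval x * (LP n).eval x = 1 / (2 * n + 1) := by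
  have h := intervalIntegral.integral_eq_sub_of_hasDerivAt (a := (0:ℝ)) (b := 1)
    (f := fun x => (X * LP n * LP n).eval x)
    (f' := fun x => (derivative (X * LP n * LP n)).eval x)
    (fun x _ => Polynomial.hasDerivAt _ _) ((Polynomial.continuous _).intervalIntegrable _ _)
  have hd : (X * derivative (LP n) - C (n:ℝ) * LP n).degree < (n : WithBot ℕ) := by
    rw [degree_lt_iff_coeff_zero]
    intro k hk
    rcases hk.lt_or_eq with hk | rfl
    · have c1 : (LP n).coeff k = 0 := coeff_eq_zero_of_degree_lt (by
        rw [LP_degree]; exact_mod_cast hk)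
      cases k with
      | zero => omega
      | succ k =>
        simp [coeff_X_mul, coeff_derivative, c1]
    · cases n with
      | zero => simp
      | succ k => 
        rw [coeff_sub, coeff_X_mul, coeff_derivative, coeff_C_mul]; push_cast; ring
  have ho := LP_orth n _ hd
  have e : ∀ x : ℝ, (derivative (X * LP n * LP n)).eval x =
      2 * ((LP n).eval x * (X * derivative (LP n) - C (n:ℝ) * LP n).eval x) 
        + (2 * n + 1) * ((LP n).eval x * (LP n).eval x) := by
    intro x; simp; ring
  simp only [e] at h
  rw [intervalIntegral.integral_add (Continuous.intervalIntegrable (by fun_prop) _ _) (Continuous.intervalIntegrable (by fun_prop) _ _), 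
    intervalIntegral.integral_const_mul, intervalIntegral.integral_const_mul, ho] at h
  simp [LP_one] at h
  rw [← mul_pow] at h
  simp at h
  rw [eq_div_iff (by positivity), mul_comm]
  exact h

/-- Legendre polynomial, paper's normalisation. -/
noncomputable def lgd (j : ℕ) (x : ℝ) : ℝ := ∑ i ∈ Finset.range (j + 1), gam i (j + 1) * x ^ i

lemma lgd_eq (j : ℕ) (x : ℝ) : lgd j x = (-1) ^ j * (LP j).eval x := by
  rw [lgd, LP, Polynomial.eval_map, Polynomial.shiftedLegendre, Polynomial.eval₂_finsetSum, Finset.mul_sum]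
  refine Finset.sum_congr rfl fun i hi => ?_
  simp [gam]
  rw [Nat.choose_symm_add, show ((-1 : Polynomial ℤ) ^ i) = Polynomial.C ((-1) ^ i) by simp,
    Polynomial.eval₂_C]
  simp
  ring

lemma lgd_cont (j : ℕ) : Continuous (lgd j) := by unfold lgd; fun_prop

lemma lgd_orth (i j : ℕ) : ∫ x in (0:ℝ)..1, lgd i x * lgd j x = if i = j then 1 / (2 * (i:ℝ) + 1) else 0 := by
  have key : ∀ i j, i < j → ∫ x in (0:ℝ)..1, lgd i x * lgd j x = 0 := by
    intro i j hij
    have := LP_orth j (LP i) (by rw [LP_degree]; exact_mod_cast hij)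
    have e : ∀ x, lgd i x * lgd j x = ((-1)^i * (-1)^j) * ((LP j).eval x * (LP i).eval x) := by
      intro x; rw [lgd_eq, lgd_eq]; ring
    simp only [e]
    rw [intervalIntegral.integral_const_mul, this, mul_zero]
  split_ifs with h
  · subst h
    have e : ∀ x, lgd i x * lgd i x = (LP i).eval x * (LP i).eval x := by
      intro x; rw [lgd_eq]
      have : ((-1:ℝ)^i) * (-1)^i = 1 := by rw [← mul_pow]; simp
      linear_combination ((LP i).eval x)^2 * this
    simp only [e, LP_norm]
  · rcases lt_or_gt_of_ne h with h | h
    · exact key i j h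
    · simp only [mul_comm (lgd i _)]; exact key j i h

lemma bessel_scalar (N : ℕ) (f g : ℝ → ℝ) (hf : Continuous f) (hg : Continuous g) :
    ∫ x in (0:ℝ)..1, (f x - ∑ j : Fin (N+1), (2 * ((j:ℕ):ℝ) + 1) * (∫ y in (0:ℝ)..1, lgd j y * f y) * lgd j x)
      * (g x - ∑ j : Fin (N+1), (2 * ((j:ℕ):ℝ) + 1) * (∫ y in (0:ℝ)..1, lgd j y * g y) * lgd j x)
    = (∫ x in (0:ℝ)..1, f x * g x) - ∑ j : Fin (N+1), (2 * ((j:ℕ):ℝ) + 1) *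
        ((∫ y in (0:ℝ)..1, lgd j y * f y) * (∫ y in (0:ℝ)..1, lgd j y * g y)) := by
  have hl := lgd_cont
  set a : Fin (N+1) → ℝ := fun j => ∫ y in (0:ℝ)..1, lgd j y * f y with ha
  set b : Fin (N+1) → ℝ := fun j => ∫ y in (0:ℝ)..1, lgd j y * g y with hb
  have e : ∀ x, (f x - ∑ j : Fin (N+1), (2 * ((j:ℕ):ℝ) + 1) * a j * lgd j x)
      * (g x - ∑ j : Fin (N+1), (2 * ((j:ℕ):ℝ) + 1) * b j * lgd j x)
      = f x * g x - ∑ j : Fin (N+1), ((2 * ((j:ℕ):ℝ) + 1) * b j) * (lgd j x * f x)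
        - ∑ j : Fin (N+1), ((2 * ((j:ℕ):ℝ) + 1) * a j) * (lgd j x * g x)
        + ∑ i : Fin (N+1), ∑ j : Fin (N+1), ((2 * ((i:ℕ):ℝ) + 1) * a i * ((2 * ((j:ℕ):ℝ) + 1) * b j))
          * (lgd i x * lgd j x) := by
    intro x
    have e1 : (∑ j : Fin (N+1), (2 * ((j:ℕ):ℝ) + 1) * a j * lgd j x) *
      (∑ j : Fin (N+1), (2 * ((j:ℕ):ℝ) + 1) * b j * lgd j x) = 
      ∑ i : Fin (N+1), ∑ j : Fin (N+1), ((2 * ((i:ℕ):ℝ) + 1) * a i * ((2 * ((j:ℕ):ℝ) + 1) * b j))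
          * (lgd i x * lgd j x) := by
      rw [Finset.sum_mul_sum]
      refine Finset.sum_congr rfl fun i _ => Finset.sum_congr rfl fun j _ => by ring
    have e2 : f x * (∑ j : Fin (N+1), (2 * ((j:ℕ):ℝ) + 1) * b j * lgd j x) = 
        ∑ j : Fin (N+1), ((2 * ((j:ℕ):ℝ) + 1) * b j) * (lgd j x * f x) := by
      rw [Finset.mul_sum]
      refine Finset.sum_congr rfl fun i _ => by ring
    have e3 : (∑ j : Fin (N+1), (2 * ((j:ℕ):ℝ) + 1) * a j * lgd j x) * g x = 
        ∑ j : Fin (N+1), ((2 * ((j:ℕ):ℝ) + 1) * a j) * (lgd j x * g x) := by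
      rw [Finset.sum_mul]
      refine Finset.sum_congr rfl fun i _ => by ring
    rw [← e1, ← e2, ← e3]; ring
  have ii : ∀ h : ℝ → ℝ, Continuous h → IntervalIntegrable h MeasureTheory.volume 0 1 :=
    fun h hh => hh.intervalIntegrable _ _
  change (∫ x in (0:ℝ)..1, (f x - ∑ j : Fin (N+1), (2 * ((j:ℕ):ℝ) + 1) * a j * lgd j x)
      * (g x - ∑ j : Fin (N+1), (2 * ((j:ℕ):ℝ) + 1) * b j * lgd j x)) =
      _ - ∑ j : Fin (N+1), (2 * ((j:ℕ):ℝ) + 1) * (a j * b j)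
  simp only [e]
  rw [intervalIntegral.integral_add (ii _ (by fun_prop)) (ii _ (by fun_prop)),
    intervalIntegral.integral_sub (ii _ (by fun_prop)) (ii _ (by fun_prop)),
    intervalIntegral.integral_sub (ii _ (by fun_prop)) (ii _ (by fun_prop)),
    intervalIntegral.integral_finsetSum (fun i _ => ii _ (by fun_prop)),
    intervalIntegral.integral_finsetSum (fun i _ => ii _ (by fun_prop)),
    intervalIntegral.integral_finsetSum (fun i _ => ii _ (by fun_prop))]
  have e4 : ∀ i : Fin (N+1), (∫ x in (0:ℝ)..1, ∑ j : Fin (N+1), ((2 * ((i:ℕ):ℝ) + 1) * a i * ((2 * ((j:ℕ):ℝ) + 1) * b j))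
          * (lgd i x * lgd j x)) = (2 * ((i:ℕ):ℝ) + 1) * (a i * b i) := by
    intro i
    rw [intervalIntegral.integral_finsetSum (fun i _ => ii _ (by fun_prop))]
    simp only [intervalIntegral.integral_const_mul, lgd_orth, Fin.val_inj, mul_ite, mul_zero]
    simp
    have : (2 * ((i:ℕ):ℝ) + 1) ≠ 0 := by positivity
    field_simp
  simp only [e4, intervalIntegral.integral_const_mul]
  have e5 : ∀ j, (∫ x in (0:ℝ)..1, lgd (j : Fin (N+1)) x * f x) = a j := fun j => rfl
  have e6 : ∀ j, (∫ x in (0:ℝ)..1, lgd (j : Fin (N+1)) x * g x) = b j := fun j => rfl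
  simp only [e5, e6]
  have e7 : ∑ j : Fin (N+1), (2 * ((j:ℕ):ℝ) + 1) * b j * a j = ∑ j : Fin (N+1), (2 * ((j:ℕ):ℝ) + 1) * (a j * b j) :=
    Finset.sum_congr rfl fun i _ => by ring
  have e8 : ∑ j : Fin (N+1), (2 * ((j:ℕ):ℝ) + 1) * a j * b j = ∑ j : Fin (N+1), (2 * ((j:ℕ):ℝ) + 1) * (a j * b j) :=
    Finset.sum_congr rfl fun i _ => by ring
  rw [e7, e8]; ring

lemma quad_sum {ι : Type*} [Fintype ι] (R : Matrix ι ι ℝ) (u v : ι → ℝ) :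
    u ⬝ᵥ R *ᵥ v = ∑ a, ∑ b, R a b * (u a * v b) := by
  simp only [dotProduct, mulVec, Finset.mul_sum]
  refine Finset.sum_congr rfl fun i _ => Finset.sum_congr rfl fun j _ => by ring

lemma posdef_nonneg {ι : Type*} [Fintype ι] {R : Matrix ι ι ℝ} (hR : R.PosDef) (u : ι → ℝ) :
    0 ≤ u ⬝ᵥ R *ᵥ u := by
  have := hR.posSemidef.dotProduct_mulVec_nonneg u
  simpa using this

lemma bessel_mat {ι : Type*} [Fintype ι] (N : ℕ) (R : Matrix ι ι ℝ) (hR : R.PosDef)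
    (w : ℝ → ι → ℝ) (hw : ∀ a, Continuous fun s => w s a) :
    ∑ j : Fin (N+1), (2 * ((j:ℕ):ℝ) + 1) *
      ((fun a => ∫ y in (0:ℝ)..1, lgd j y * w y a) ⬝ᵥ R *ᵥ (fun a => ∫ y in (0:ℝ)..1, lgd j y * w y a))
      ≤ ∫ x in (0:ℝ)..1, w x ⬝ᵥ R *ᵥ w x := by
  have hl := lgd_cont
  have h0 : 0 ≤ ∫ x in (0:ℝ)..1, 
    (fun a => w x a - ∑ j : Fin (N+1), (2 * ((j:ℕ):ℝ) + 1) * (∫ y in (0:ℝ)..1, lgd j y * w y a) * lgd j x)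
    ⬝ᵥ R *ᵥ (fun a => w x a - ∑ j : Fin (N+1), (2 * ((j:ℕ):ℝ) + 1) * (∫ y in (0:ℝ)..1, lgd j y * w y a) * lgd j x) :=
    intervalIntegral.integral_nonneg (by norm_num) fun x _ => posdef_nonneg hR _
  have ii : ∀ h : ℝ → ℝ, Continuous h → IntervalIntegrable h MeasureTheory.volume 0 1 :=
    fun h hh => hh.intervalIntegrable _ _
  simp only [quad_sum] at h0 ⊢
  rw [intervalIntegral.integral_finsetSum (fun i _ => ii _ (by fun_prop))] at h0 ⊢
  have e1 : ∀ i, (∫ x in (0:ℝ)..1, ∑ b, R i b * (w x i * w x b)) = ∑ b, R i b * ∫ x in (0:ℝ)..1, (w x i * w x b) := by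
    intro i
    rw [intervalIntegral.integral_finsetSum (fun i _ => ii _ (by fun_prop))]
    simp only [intervalIntegral.integral_const_mul]
  have e2 : ∀ i, (∫ x in (0:ℝ)..1, ∑ b, R i b * ((w x i - ∑ j : Fin (N+1), (2 * ((j:ℕ):ℝ) + 1) * (∫ y in (0:ℝ)..1, lgd j y * w y i) * lgd j x) * (w x b - ∑ j : Fin (N+1), (2 * ((j:ℕ):ℝ) + 1) * (∫ y in (0:ℝ)..1, lgd j y * w y b) * lgd j x))) = ∑ b, R i b * ((∫ x in (0:ℝ)..1, (w x i * w x b)) - ∑ j : Fin (N+1), (2 * ((j:ℕ):ℝ) + 1) *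
        ((∫ y in (0:ℝ)..1, lgd j y * w y i) * (∫ y in (0:ℝ)..1, lgd j y * w y b))) := by
    intro i
    rw [intervalIntegral.integral_finsetSum (fun i _ => ii _ (by fun_prop))]
    simp only [intervalIntegral.integral_const_mul]
    refine Finset.sum_congr rfl fun b _ => ?_
    rw [bessel_scalar N _ _ (hw i) (hw b)]
  simp only [e1, e2] at h0 ⊢
  simp only [mul_sub, Finset.sum_sub_distrib] at h0
  have e3 : ∑ j : Fin (N+1), (2 * ((j:ℕ):ℝ) + 1) * (∑ a, ∑ b, R a b * ((∫ y in (0:ℝ)..1, lgd j y * w y a) * (∫ y in (0:ℝ)..1, lgd j y * w y b))) = ∑ a, ∑ b, R a b * ∑ j : Fin (N+1), (2 * ((j:ℕ):ℝ) + 1) *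
        ((∫ y in (0:ℝ)..1, lgd j y * w y a) * (∫ y in (0:ℝ)..1, lgd j y * w y b)) := by
    simp only [Finset.mul_sum]
    rw [Finset.sum_comm]
    refine Finset.sum_congr rfl fun a _ => ?_
    rw [Finset.sum_comm]
    refine Finset.sum_congr rfl fun b _ => Finset.sum_congr rfl fun j _ => by ring
  rw [e3]; linarith

lemma scalar_conv (V V' g g' : ℝ → ℝ) (c : ℝ) (hc : 0 < c)
    (hV : ∀ t, HasDerivAt V (V' t) t) (hg : ∀ t, HasDerivAt g (g' t) t)
    (V0 : ∀ t, 0 ≤ V t) (g0 : ∀ t, 0 ≤ g t)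
    (h1 : ∀ t, V' t ≤ -(c * g t)) (h2 : ∀ t, V' t ≤ -(c * |g' t|)) :
    Filter.Tendsto g Filter.atTop (nhds 0) := by
  have a1 : Antitone V := antitone_of_deriv_nonpos (fun t => (hV t).differentiableAt) (fun t => by
    rw [(hV t).deriv]; nlinarith [h1 t, g0 t])
  have hH : ∀ t, HasDerivAt (fun t => V t + c * g t) (V' t + c * g' t) t :=
    fun t => (hV t).add ((hg t).const_mul c)
  have a2 : Antitone (fun t => V t + c * g t) :=
    antitone_of_deriv_nonpos (fun t => (hH t).differentiableAt) (fun t => by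
      rw [(hH t).deriv]; nlinarith [h2 t, le_abs_self (g' t)])
  have t1 := tendsto_atTop_ciInf a1 ⟨0, by rintro _ ⟨t, rfl⟩; exact V0 t⟩
  have t2 := tendsto_atTop_ciInf a2 ⟨0, by rintro _ ⟨t, rfl⟩; have := V0 t; have := g0 t; positivity⟩
  obtain ⟨ℓ, hℓ⟩ : ∃ ℓ, Filter.Tendsto g Filter.atTop (nhds ℓ) := by
    refine ⟨_, ((t2.sub t1).const_mul c⁻¹).congr fun t => ?_⟩
    field_simp; ring
  have l0 : 0 ≤ ℓ := ge_of_tendsto' hℓ g0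
  rcases l0.eq_or_lt with h | h
  · rw [h]; exact hℓ
  exfalso
  have ev : ∀ᶠ t in Filter.atTop, ℓ / 2 < g t := hℓ.eventually (lt_mem_nhds (by linarith))
  obtain ⟨T, hT⟩ := Filter.eventually_atTop.1 ev
  have hK : ∀ t, HasDerivAt (fun t => V t + c * (ℓ / 2) * t) (V' t + c * (ℓ / 2) * 1) t :=
    fun t => (hV t).add ((hasDerivAt_id t).const_mul _)
  have a3 : AntitoneOn (fun t => V t + c * (ℓ / 2) * t) (Set.Ici T) := by
    apply antitoneOn_of_deriv_nonpos (convex_Ici T)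
    · exact fun t _ => (hK t).continuousAt.continuousWithinAt
    · exact fun t _ => (hK t).differentiableAt.differentiableWithinAt
    · intro t ht
      rw [interior_Ici] at ht
      rw [(hK t).deriv]
      have := hT t (le_of_lt ht)
      nlinarith [h1 t]
  have hp : 0 < c * (ℓ / 2) := by positivity
  have := a3 (Set.mem_Ici.2 le_rfl) (Set.mem_Ici.2 (show T ≤ T + (V T + 1) / (c * (ℓ/2)) by
    have := V0 T
    have : 0 ≤ (V T + 1) / (c * (ℓ/2)) := by positivity
    linarith)) (by
    have := V0 T
    have : 0 ≤ (V T + 1) / (c * (ℓ/2)) := by positivity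
    linarith)
  simp only [mul_add] at this
  rw [mul_div_cancel₀ _ hp.ne'] at this
  have := V0 (T + (V T + 1) / (c * (ℓ/2)))
  linarith

lemma posdef_coercive {ι : Type*} [Fintype ι] {M : Matrix ι ι ℝ} (hM : M.PosDef) :
    ∃ c : ℝ, 0 < c ∧ ∀ x : ι → ℝ, c * ‖x‖ ^ 2 ≤ x ⬝ᵥ M *ᵥ x := by
  have hcont : Continuous (fun x : ι → ℝ => x ⬝ᵥ M *ᵥ x) := by
    simp only [quad_sum]; fun_prop
  by_cases hne : (Metric.sphere (0 : ι → ℝ) 1).Nonempty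
  · obtain ⟨y, hy, hmin⟩ := (isCompact_sphere (0 : ι → ℝ) 1).exists_isMinOn hne hcont.continuousOn
    have hy0 : y ≠ 0 := by
      rintro rfl; simp at hy
    refine ⟨y ⬝ᵥ M *ᵥ y, by simpa using hM.dotProduct_mulVec_pos hy0, fun x => ?_⟩
    by_cases hx : x = 0
    · simp [hx]
    have hxn : ‖x‖ ≠ 0 := norm_ne_zero_iff.2 hx
    have := hmin (show ‖x‖⁻¹ • x ∈ Metric.sphere (0 : ι → ℝ) 1 by
      simp [norm_smul, hxn])
    simp only [Set.mem_ofPred_eq, mulVec_smul, dotProduct_smul, smul_dotProduct, smul_eq_mul] at this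
    calc _ ≤ (‖x‖⁻¹ * (‖x‖⁻¹ * x ⬝ᵥ M *ᵥ x)) * ‖x‖ ^ 2 := by gcongr
      _ = _ := by field_simp
  · refine ⟨1, one_pos, fun x => ?_⟩
    have : x = 0 := by
      by_contra hx
      exact hne ⟨‖x‖⁻¹ • x, by simp [norm_smul, norm_ne_zero_iff.2 hx]⟩
    simp [this]

lemma hasDeriv_J (q : ℝ → ℝ) (hq : Continuous q) (a b t : ℝ) :
    HasDerivAt (fun t => ∫ s in (t - b)..(t - a), q s) (q (t - a) - q (t - b)) t := by
  have hH : ∀ t, HasDerivAt (fun t => ∫ s in (0:ℝ)..t, q s) (q t) t := fun t =>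
    intervalIntegral.integral_hasDerivAt_right (hq.intervalIntegrable _ _)
      hq.aestronglyMeasurable.stronglyMeasurableAtFilter hq.continuousAt
  have e : (fun t => ∫ s in (t - b)..(t - a), q s) =
      fun t => (∫ s in (0:ℝ)..(t - a), q s) - ∫ s in (0:ℝ)..(t - b), q s := by
    funext t
    rw [intervalIntegral.integral_interval_sub_left (hq.intervalIntegrable _ _) (hq.intervalIntegrable _ _)]
  rw [e]
  exact ((hH (t - a)).comp_sub_const t a).sub ((hH (t - b)).comp_sub_const t b)

lemma hasDeriv_D (q : ℝ → ℝ) (hq : Continuous q) (a b t : ℝ) :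
    HasDerivAt (fun t => ∫ r in (t - b)..(t - a), ∫ s in r..t, q s)
      ((b - a) * q t - ∫ s in (t - b)..(t - a), q s) t := by
  have hH : ∀ t, HasDerivAt (fun t => ∫ s in (0:ℝ)..t, q s) (q t) t := fun t =>
    intervalIntegral.integral_hasDerivAt_right (hq.intervalIntegrable _ _)
      hq.aestronglyMeasurable.stronglyMeasurableAtFilter hq.continuousAt
  have hHc : Continuous (fun t => ∫ s in (0:ℝ)..t, q s) :=
    continuous_iff_continuousAt.2 fun t => (hH t).continuousAt
  have e : (fun t => ∫ r in (t - b)..(t - a), ∫ s in r..t, q s) =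
      fun t => (b - a) * (∫ s in (0:ℝ)..t, q s) - ∫ r in (t - b)..(t - a), ∫ s in (0:ℝ)..r, q s := by
    funext t
    have : ∀ r, ∫ s in r..t, q s = (∫ s in (0:ℝ)..t, q s) - ∫ s in (0:ℝ)..r, q s := fun r => by
      rw [intervalIntegral.integral_interval_sub_left (hq.intervalIntegrable _ _) (hq.intervalIntegrable _ _)]
    rw [intervalIntegral.integral_congr (g := fun r => (∫ s in (0:ℝ)..t, q s) - ∫ s in (0:ℝ)..r, q s)
      (fun r _ => this r)]
    rw [intervalIntegral.integral_sub (by simp) (hHc.intervalIntegrable _ _)]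
    simp
  rw [e]
  have := ((hH t).const_mul (b - a)).sub (hasDeriv_J _ hHc a b t)
  rw [intervalIntegral.integral_interval_sub_left (hq.intervalIntegrable _ _) (hq.intervalIntegrable _ _)] at this
  exact this

lemma D_nonneg (q : ℝ → ℝ) (hq0 : ∀ s, 0 ≤ q s) (a b t : ℝ) (ha : 0 ≤ a) (hab : a ≤ b) :
    0 ≤ ∫ r in (t - b)..(t - a), ∫ s in r..t, q s :=
  intervalIntegral.integral_nonneg (by linarith) fun r hr =>
    intervalIntegral.integral_nonneg (by linarith [hr.2]) fun s _ => hq0 s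

lemma hasDeriv_quad {ι : Type*} [Fintype ι] (M : Matrix ι ι ℝ) (hM : M.IsSymm) (u : ℝ → ι → ℝ) (u' : ι → ℝ)
    (t : ℝ) (hu : ∀ a, HasDerivAt (fun s => u s a) (u' a) t) :
    HasDerivAt (fun s => u s ⬝ᵥ M *ᵥ u s) (2 * (u' ⬝ᵥ M *ᵥ u t)) t := by
  have e : 2 * (u' ⬝ᵥ M *ᵥ u t) = ∑ a, ∑ b, M a b * (u' a * u t b + u t a * u' b) := by
    simp only [mul_add, Finset.sum_add_distrib]
    rw [← quad_sum, ← quad_sum, two_mul]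
    congr 1
    rw [dotProduct_mulVec, dotProduct_comm, ← mulVec_transpose, hM.eq]
  rw [e]
  simp only [quad_sum]
  refine HasDerivAt.fun_sum fun a _ => HasDerivAt.fun_sum fun b _ => ?_
  exact ((hu a).mul (hu b)).const_mul _

lemma cont_quad {ι : Type*} [Fintype ι] (M : Matrix ι ι ℝ) (u : ℝ → ι → ℝ)
    (hu : ∀ a, Continuous (fun s => u s a)) : Continuous (fun s => u s ⬝ᵥ M *ᵥ u s) := by
  simp only [quad_sum]; fun_prop

lemma posdef_symm {ι : Type*} [Fintype ι] {M : Matrix ι ι ℝ} (hM : M.PosDef) : M.IsSymm := by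
  have := hM.isHermitian
  simpa [Matrix.IsHermitian, Matrix.IsSymm, conjTranspose_eq_transpose_of_trivial] using this

/-- `ω = (ż, z)`. -/
def omg {α : Type*} (z zd : ℝ → α → ℝ) (s : ℝ) : α ⊕ α → ℝ := Sum.elim (zd s) (z s)

noncomputable def vpF {α : Type*} (z : ℝ → α → ℝ) (l u t : ℝ) : Fin 3 × α → ℝ := fun c =>
  if c.1 = 0 then z t c.2
  else if c.1 = 1 then ∫ s in (t - l)..(t - 0), z s c.2
  else ∫ s in (t - u)..(t - l), z s c.2

noncomputable def vpD {α : Type*} (z zd : ℝ → α → ℝ) (l u t : ℝ) : Fin 3 × α → ℝ := fun c =>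
  if c.1 = 0 then zd t c.2
  else if c.1 = 1 then z t c.2 - z (t - l) c.2
  else z (t - l) c.2 - z (t - u) c.2

noncomputable def VkF {α : Type*} [Fintype α] (z zd : ℝ → α → ℝ)
    (P : Matrix (Fin 3 × α) (Fin 3 × α) ℝ) (Q1 Q2 : Matrix α α ℝ)
    (R1 R2 : Matrix (α ⊕ α) (α ⊕ α) ℝ) (l u t : ℝ) : ℝ :=
  vpF z l u t ⬝ᵥ P *ᵥ vpF z l u t
  + (∫ s in (t - l)..(t - 0), z s ⬝ᵥ Q1 *ᵥ z s)
  + (∫ s in (t - u)..(t - l), z s ⬝ᵥ Q2 *ᵥ z s)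
  + (∫ r in (t - l)..(t - 0), ∫ s in r..t, omg z zd s ⬝ᵥ R1 *ᵥ omg z zd s)
  + (∫ r in (t - u)..(t - l), ∫ s in r..t, omg z zd s ⬝ᵥ R2 *ᵥ omg z zd s)

noncomputable def VkD {α : Type*} [Fintype α] (z zd : ℝ → α → ℝ)
    (P : Matrix (Fin 3 × α) (Fin 3 × α) ℝ) (Q1 Q2 : Matrix α α ℝ)
    (R1 R2 : Matrix (α ⊕ α) (α ⊕ α) ℝ) (l u t : ℝ) : ℝ :=
  2 * (vpD z zd l u t ⬝ᵥ P *ᵥ vpF z l u t)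
  + (z t ⬝ᵥ Q1 *ᵥ z t - z (t - l) ⬝ᵥ Q1 *ᵥ z (t - l))
  + (z (t - l) ⬝ᵥ Q2 *ᵥ z (t - l) - z (t - u) ⬝ᵥ Q2 *ᵥ z (t - u))
  + (l * (omg z zd t ⬝ᵥ R1 *ᵥ omg z zd t) - ∫ s in (t - l)..t, omg z zd s ⬝ᵥ R1 *ᵥ omg z zd s)
  + ((u - l) * (omg z zd t ⬝ᵥ R2 *ᵥ omg z zd t)
      - ∫ s in (t - u)..(t - l), omg z zd s ⬝ᵥ R2 *ᵥ omg z zd s)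

lemma omg_cont {α : Type*} (z zd : ℝ → α → ℝ) (hz : ∀ a, Continuous fun s => z s a)
    (hzd : ∀ a, Continuous fun s => zd s a) (c : α ⊕ α) : Continuous fun s => omg z zd s c := by
  cases c with
  | inl a => exact hzd a
  | inr a => exact hz a

lemma VkF_deriv {α : Type*} [Fintype α] (z zd : ℝ → α → ℝ)
    (hz : ∀ a t, HasDerivAt (fun s => z s a) (zd t a) t)
    (hzd : ∀ a, Continuous fun s => zd s a)
    (P : Matrix (Fin 3 × α) (Fin 3 × α) ℝ) (hP : P.IsSymm) (Q1 Q2 : Matrix α α ℝ)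
    (R1 R2 : Matrix (α ⊕ α) (α ⊕ α) ℝ) (l u t : ℝ) :
    HasDerivAt (VkF z zd P Q1 Q2 R1 R2 l u) (VkD z zd P Q1 Q2 R1 R2 l u t) t := by
  have hzc : ∀ a, Continuous fun s => z s a := fun a =>
    continuous_iff_continuousAt.2 fun t => (hz a t).continuousAt
  have hom := omg_cont z zd hzc hzd
  have d1 : HasDerivAt (fun t => vpF z l u t ⬝ᵥ P *ᵥ vpF z l u t)
      (2 * (vpD z zd l u t ⬝ᵥ P *ᵥ vpF z l u t)) t := by
    refine hasDeriv_quad P hP _ _ t ?_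
    rintro ⟨i, a⟩
    unfold vpF vpD
    by_cases h0 : i = 0
    · simpa [h0] using hz a t
    · by_cases h1 : i = 1
      · simpa [h1] using hasDeriv_J _ (hzc a) 0 l t
      · simpa [h0, h1] using hasDeriv_J _ (hzc a) l u t
  have d2 := hasDeriv_J _ (cont_quad Q1 z hzc) 0 l t
  have d3 := hasDeriv_J _ (cont_quad Q2 z hzc) l u t
  have d4 := hasDeriv_D _ (cont_quad R1 _ hom) 0 l t
  have d5 := hasDeriv_D _ (cont_quad R2 _ hom) l u t
  have := (((d1.add d2).add d3).add d4).add d5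
  simp only [sub_zero] at this
  unfold VkD
  refine this.congr_of_eventuallyEq (Filter.Eventually.of_forall fun s => ?_)
  simp [VkF]

lemma VkF_nonneg {α : Type*} [Fintype α] (z zd : ℝ → α → ℝ)
    (P : Matrix (Fin 3 × α) (Fin 3 × α) ℝ) (hP : P.PosDef) (Q1 Q2 : Matrix α α ℝ)
    (hQ1 : Q1.PosDef) (hQ2 : Q2.PosDef)
    (R1 R2 : Matrix (α ⊕ α) (α ⊕ α) ℝ) (hR1 : R1.PosDef) (hR2 : R2.PosDef) (l u t : ℝ)
    (hl : 0 ≤ l) (hlu : l ≤ u) :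
    0 ≤ VkF z zd P Q1 Q2 R1 R2 l u t := by
  unfold VkF
  have e1 := posdef_nonneg hP (vpF z l u t)
  have e2 : 0 ≤ ∫ s in (t - l)..(t - 0), z s ⬝ᵥ Q1 *ᵥ z s :=
    intervalIntegral.integral_nonneg (by linarith) fun s _ => posdef_nonneg hQ1 _
  have e3 : 0 ≤ ∫ s in (t - u)..(t - l), z s ⬝ᵥ Q2 *ᵥ z s :=
    intervalIntegral.integral_nonneg (by linarith) fun s _ => posdef_nonneg hQ2 _
  have e4 := D_nonneg (fun s => omg z zd s ⬝ᵥ R1 *ᵥ omg z zd s) (fun s => posdef_nonneg hR1 _) 0 l t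
    le_rfl hl
  have e5 := D_nonneg (fun s => omg z zd s ⬝ᵥ R2 *ᵥ omg z zd s) (fun s => posdef_nonneg hR2 _) l u t
    hl hlu
  linarith

/-- Legendre coefficients of `ω` on `[a, a+h]`. -/
noncomputable def OmL {α : Type*} (z zd : ℝ → α → ℝ) (a h : ℝ) (j : ℕ) : α ⊕ α → ℝ := fun c =>
  ∫ y in (0:ℝ)..1, lgd j y * omg z zd (a + h * y) c

noncomputable def muL {α : Type*} (z : ℝ → α → ℝ) (a h : ℝ) (i : ℕ) : α → ℝ := fun c =>
  ∫ y in (0:ℝ)..1, y ^ i * z (a + h * y) c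

lemma bessel_seg {α : Type*} [Fintype α] (z zd : ℝ → α → ℝ) (hz : ∀ a, Continuous fun s => z s a)
    (hzd : ∀ a, Continuous fun s => zd s a) (N : ℕ) (R : Matrix (α ⊕ α) (α ⊕ α) ℝ) (hR : R.PosDef)
    (a h b : ℝ) (hh : 0 ≤ h) (hb : a + h = b) :
    h * ∑ j : Fin (N+1), (2 * ((j:ℕ):ℝ) + 1) * (OmL z zd a h j ⬝ᵥ R *ᵥ OmL z zd a h j)
      ≤ ∫ s in a..b, omg z zd s ⬝ᵥ R *ᵥ omg z zd s := by
  have h1 := bessel_mat N R hR (fun y => omg z zd (a + h * y)) (fun c =>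
    (omg_cont z zd hz hzd c).comp (by fun_prop : Continuous fun y : ℝ => a + h * y))
  have h2 := intervalIntegral.mul_integral_comp_add_mul (a := 0) (b := 1)
    (f := fun s => omg z zd s ⬝ᵥ R *ᵥ omg z zd s) (c := h) (d := a)
  simp only [mul_zero, add_zero, mul_one, hb] at h2
  rw [← h2]
  exact mul_le_mul_of_nonneg_left h1 hh

lemma mom_parts {α : Type*} (z zd : ℝ → α → ℝ)
    (hz : ∀ a t, HasDerivAt (fun s => z s a) (zd t a) t)
    (hzd : ∀ a, Continuous fun s => zd s a) (a h : ℝ) (i : ℕ) (c : α) :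
    h * ∫ y in (0:ℝ)..1, y ^ i * zd (a + h * y) c
      = z (a + h) c - (if i = 0 then z a c else (i:ℝ) * muL z a h (i - 1) c) := by
  have hzc : ∀ a, Continuous fun s => z s a := fun a =>
    continuous_iff_continuousAt.2 fun t => (hz a t).continuousAt
  have hlin : Continuous fun y : ℝ => a + h * y := by fun_prop
  have c1 : Continuous fun y : ℝ => z (a + h * y) c := (hzc c).comp hlin
  have c2 : Continuous fun y : ℝ => zd (a + h * y) c := (hzd c).comp hlin
  have hd : ∀ y, HasDerivAt (fun y => y ^ i * z (a + h * y) c)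
      ((i:ℝ) * (y ^ (i - 1) * z (a + h * y) c) + h * (y ^ i * zd (a + h * y) c)) y := by
    intro y
    have i1 : HasDerivAt (fun y : ℝ => a + h * y) h y := by
      simpa using ((hasDerivAt_id y).const_mul h).const_add a
    have i2 := (hz c (a + h * y)).comp y i1
    have := (hasDerivAt_pow i y).mul i2
    refine this.congr_deriv ?_
    simp; ring
  have := intervalIntegral.integral_eq_sub_of_hasDerivAt (a := 0) (b := 1) (fun y _ => hd y)
    (Continuous.intervalIntegrable (by fun_prop) _ _)
  rw [intervalIntegral.integral_add (Continuous.intervalIntegrable (by fun_prop) _ _)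
    (Continuous.intervalIntegrable (by fun_prop) _ _), intervalIntegral.integral_const_mul,
    intervalIntegral.integral_const_mul] at this
  unfold muL
  by_cases h0 : i = 0
  · subst h0; simp at this ⊢; linarith
  · simp [h0] at this ⊢; linarith

lemma mu_zero {α : Type*} (z : ℝ → α → ℝ) (a h b : ℝ) (hb : a + h = b) (c : α) :
    h * muL z a h 0 c = ∫ s in a..b, z s c := by
  have h2 := intervalIntegral.mul_integral_comp_add_mul (a := 0) (b := 1)
    (f := fun s => z s c) (c := h) (d := a)
  simp only [mul_zero, add_zero, mul_one, hb] at h2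
  rw [← h2]; simp [muL]

lemma OmL_inr {α : Type*} (z zd : ℝ → α → ℝ)
    (hz : ∀ a, Continuous fun s => z s a) (a h : ℝ) (j : ℕ) (c : α) :
    OmL z zd a h j (Sum.inr c) = ∑ i ∈ Finset.range (j+1), gam i (j+1) * muL z a h i c := by
  have hlin : Continuous fun y : ℝ => a + h * y := by fun_prop
  have c1 : Continuous fun y : ℝ => z (a + h * y) c := (hz c).comp hlin
  unfold OmL muL lgd omg
  simp only [Sum.elim_inr, Finset.sum_mul, mul_assoc]
  rw [intervalIntegral.integral_finsetSum (fun i _ => Continuous.intervalIntegrable (by fun_prop) _ _)]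
  simp only [intervalIntegral.integral_const_mul]

lemma OmL_inl {α : Type*} (z zd : ℝ → α → ℝ)
    (hz : ∀ a t, HasDerivAt (fun s => z s a) (zd t a) t)
    (hzd : ∀ a, Continuous fun s => zd s a) (a h : ℝ) (j : ℕ) (c : α) :
    h * OmL z zd a h j (Sum.inl c) = ∑ i ∈ Finset.range (j+1), gam i (j+1) *
      (z (a + h) c - (if i = 0 then z a c else (i:ℝ) * muL z a h (i - 1) c)) := by
  have hlin : Continuous fun y : ℝ => a + h * y := by fun_prop
  have c1 : Continuous fun y : ℝ => zd (a + h * y) c := (hzd c).comp hlin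
  simp only [← mom_parts z zd hz hzd a h]
  unfold OmL lgd omg
  simp only [Sum.elim_inl, Finset.sum_mul, mul_assoc]
  rw [intervalIntegral.integral_finsetSum (fun i _ => Continuous.intervalIntegrable (by fun_prop) _ _)]
  simp only [intervalIntegral.integral_const_mul, Finset.mul_sum]
  exact Finset.sum_congr rfl fun i _ => by ring

lemma Wb_quad (m n : ℕ) (W : Matrix (ag m n) (ag m n) ℝ) (hW : W.IsSymm) (u v : ag m n → ℝ) :
    Sum.elim u v ⬝ᵥ Wb m n W *ᵥ Sum.elim u v = 2 * (u ⬝ᵥ W *ᵥ v) := by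
  have h : ∑ a, ∑ b, W a b * (v a * u b) = ∑ a, ∑ b, W a b * (u a * v b) := by
    rw [Finset.sum_comm]
    refine Finset.sum_congr rfl fun a _ => Finset.sum_congr rfl fun b _ => ?_
    rw [← hW.apply a b]; ring
  rw [quad_sum, quad_sum]
  simp only [Fintype.sum_sum_type, Wb, Sum.elim_inl, Sum.elim_inr, zero_mul, Finset.sum_const_zero,
    add_zero, zero_add]
  rw [h]; ring

lemma Wb_int (m n : ℕ) (W : Matrix (ag m n) (ag m n) ℝ) (hW : W.IsSymm) (z zd : ℝ → ag m n → ℝ)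
    (hz : ∀ a t, HasDerivAt (fun s => z s a) (zd t a) t)
    (hzd : ∀ a, Continuous fun s => zd s a) (R : Matrix (ag m n ⊕ ag m n) (ag m n ⊕ ag m n) ℝ)
    (a b : ℝ) :
    ∫ s in a..b, omg z zd s ⬝ᵥ (R + Wb m n W) *ᵥ omg z zd s =
      (∫ s in a..b, omg z zd s ⬝ᵥ R *ᵥ omg z zd s) + (z b ⬝ᵥ W *ᵥ z b - z a ⬝ᵥ W *ᵥ z a) := by
  have hzc : ∀ a, Continuous fun s => z s a := fun a =>
    continuous_iff_continuousAt.2 fun t => (hz a t).continuousAt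
  have hom := omg_cont z zd hzc hzd
  simp only [add_mulVec, dotProduct_add]
  rw [intervalIntegral.integral_add ((cont_quad _ _ hom).intervalIntegrable _ _)
    ((cont_quad _ _ hom).intervalIntegrable _ _)]
  congr 1
  have e : ∀ s, omg z zd s ⬝ᵥ Wb m n W *ᵥ omg z zd s = 2 * (zd s ⬝ᵥ W *ᵥ z s) :=
    fun s => Wb_quad m n W hW _ _
  refine intervalIntegral.integral_eq_sub_of_hasDerivAt (f := fun s => z s ⬝ᵥ W *ᵥ z s)
    (fun s _ => ?_) ((cont_quad _ _ hom).intervalIntegrable _ _)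
  rw [e]
  exact hasDeriv_quad W hW z (zd s) s fun a => hz a s

lemma quad_mul {ι κ κ' : Type*} [Fintype ι] [Fintype κ] [Fintype κ'] (X : Matrix ι κ ℝ)
    (P : Matrix κ κ' ℝ) (Z : Matrix ι κ' ℝ) (ζ : ι → ℝ) :
    ζ ⬝ᵥ (X * P * Zᵀ) *ᵥ ζ = (ζ ᵥ* X) ⬝ᵥ P *ᵥ (ζ ᵥ* Z) := by
  rw [← mulVec_mulVec, ← mulVec_mulVec, dotProduct_mulVec, mulVec_transpose]

lemma quad_mul' {ι κ : Type*} [Fintype ι] [Fintype κ] (X : Matrix ι κ ℝ)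
    (Z : Matrix ι κ ℝ) (ζ : ι → ℝ) :
    ζ ⬝ᵥ (X * Zᵀ) *ᵥ ζ = (ζ ᵥ* X) ⬝ᵥ (ζ ᵥ* Z) := by
  rw [← mulVec_mulVec, dotProduct_mulVec, mulVec_transpose]

lemma quad_symM {ι : Type*} [Fintype ι] (X : Matrix ι ι ℝ) (ζ : ι → ℝ) :
    ζ ⬝ᵥ (symM X) *ᵥ ζ = 2 * (ζ ⬝ᵥ X *ᵥ ζ) := by
  rw [symM, add_mulVec, dotProduct_add, two_mul, mulVec_transpose, dotProduct_comm ζ (ζ ᵥ* X),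
    ← dotProduct_mulVec]

/-- `k`-th summand of the quadratic form of `Π̄`. -/
noncomputable def pibarK (m n r N : ℕ) (A : Matrix (Fin n) (Fin n) ℝ) (adj : Fin m → Fin m → ℝ)
    (B : Matrix (Fin n) (Fin r) ℝ) (K : Matrix (Fin r) (Fin n) ℝ)
    (τl τu τv : Fin m → ℝ)
    (P : Fin m → Matrix (Fin 3 × ag m n) (Fin 3 × ag m n) ℝ)
    (Q1 Q2 : Fin m → Matrix (ag m n) (ag m n) ℝ)
    (R1 R2 : Fin m → Matrix (ag m n ⊕ ag m n) (ag m n ⊕ ag m n) ℝ)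
    (W1 W2 W3 : Fin m → Matrix (ag m n) (ag m n) ℝ)
    (Y : Fin 3 → Fin m → Fin (2 * N + 1) → Matrix (bg m n N) (ag m n) ℝ)
    (ζ : bg m n N → ℝ) (k : Fin m) : ℝ :=
  2 * ((ζ ᵥ* Pi2 m n r N A adj B K k) ⬝ᵥ P k *ᵥ (ζ ᵥ* Pi1 m n N τl τu τv k))
  + (ζ ᵥ* eB m n N 1) ⬝ᵥ (Q1 k + W1 k) *ᵥ (ζ ᵥ* eB m n N 1)
  + (ζ ᵥ* eB m n N ((k : ℕ) + 2)) ⬝ᵥ (Q2 k - Q1 k + W2 k - W1 k) *ᵥ (ζ ᵥ* eB m n N ((k : ℕ) + 2))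
  + (ζ ᵥ* eB m n N (2 * m + (k : ℕ) + 2)) ⬝ᵥ (W3 k - W2 k) *ᵥ (ζ ᵥ* eB m n N (2 * m + (k : ℕ) + 2))
  - (ζ ᵥ* eB m n N (m + (k : ℕ) + 2)) ⬝ᵥ (Q2 k + W3 k) *ᵥ (ζ ᵥ* eB m n N (m + (k : ℕ) + 2))
  + (ζ ᵥ* Pi3 m n r N A adj B K) ⬝ᵥ (τl k • R1 k + (τu k - τl k) • R2 k) *ᵥ (ζ ᵥ* Pi3 m n r N A adj B K)
  + 2 * ((ζ ᵥ* Yb m n N Y 0 k) ⬝ᵥ (ζ ᵥ* Mb m n N τl τu τv 0 k)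
    + (ζ ᵥ* Yb m n N Y 1 k) ⬝ᵥ (ζ ᵥ* Mb m n N τl τu τv 1 k)
    + (ζ ᵥ* Yb m n N Y 2 k) ⬝ᵥ (ζ ᵥ* Mb m n N τl τu τv 2 k))

lemma pibar_quad (m n r N : ℕ) (A : Matrix (Fin n) (Fin n) ℝ) (adj : Fin m → Fin m → ℝ)
    (B : Matrix (Fin n) (Fin r) ℝ) (K : Matrix (Fin r) (Fin n) ℝ)
    (τl τu τv : Fin m → ℝ)
    (P : Fin m → Matrix (Fin 3 × ag m n) (Fin 3 × ag m n) ℝ)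
    (Q1 Q2 : Fin m → Matrix (ag m n) (ag m n) ℝ)
    (R1 R2 : Fin m → Matrix (ag m n ⊕ ag m n) (ag m n ⊕ ag m n) ℝ)
    (W1 W2 W3 : Fin m → Matrix (ag m n) (ag m n) ℝ)
    (Y : Fin 3 → Fin m → Fin (2 * N + 1) → Matrix (bg m n N) (ag m n) ℝ)
    (ζ : bg m n N → ℝ) :
    ζ ⬝ᵥ (PibarT m n r N A adj B K τl τu τv P Q1 Q2 R1 R2 W1 W2 W3 Y) *ᵥ ζ =
      ∑ k, pibarK m n r N A adj B K τl τu τv P Q1 Q2 R1 R2 W1 W2 W3 Y ζ k := by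
  unfold PibarT
  rw [sum_mulVec, dotProduct_sum]
  refine Finset.sum_congr rfl fun k _ => ?_
  unfold pibarK
  simp only [add_mulVec (symM _), add_mulVec (_ + _ : Matrix (bg m n N) (bg m n N) ℝ),
    add_mulVec (_ - _ : Matrix (bg m n N) (bg m n N) ℝ),
    sub_mulVec (_ : Matrix (bg m n N) (bg m n N) ℝ), dotProduct_add, dotProduct_sub,
    quad_symM, quad_mul, add_mulVec (_ : Matrix (bg m n N) (bg m n N) ℝ)]
  simp only [quad_mul']

lemma X1_quad (m n N : ℕ) (τl : Fin m → ℝ)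
    (Y : Fin 3 → Fin m → Fin (2 * N + 1) → Matrix (bg m n N) (ag m n) ℝ)
    (ζ : bg m n N → ℝ) (η : Fin m × kp m n N → ℝ) :
    ζ ⬝ᵥ X1b m n N τl Y *ᵥ η =
      ∑ k, τl k * ((ζ ᵥ* Yb m n N Y 0 k) ⬝ᵥ fun c => η (k, c)) := by
  rw [dotProduct_mulVec]
  simp only [dotProduct, vecMul, Fintype.sum_prod_type (α₁ := Fin m), X1b, Finset.mul_sum,
    Finset.sum_mul]
  exact Finset.sum_congr rfl fun k _ => Finset.sum_congr rfl fun c _ =>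
    Finset.sum_congr rfl fun p _ => by ring

lemma X23_quad (m n N : ℕ) (τl τu τv : Fin m → ℝ)
    (Y : Fin 3 → Fin m → Fin (2 * N + 1) → Matrix (bg m n N) (ag m n) ℝ)
    (ζ : bg m n N → ℝ) (η : Fin m × kp m n N → ℝ) :
    ζ ⬝ᵥ X23b m n N τl τu τv Y *ᵥ η =
      ∑ k, ((τv k - τl k) * ((ζ ᵥ* Yb m n N Y 1 k) ⬝ᵥ fun c => η (k, c))
        + (τu k - τv k) * ((ζ ᵥ* Yb m n N Y 2 k) ⬝ᵥ fun c => η (k, c))) := by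
  rw [dotProduct_mulVec]
  simp only [dotProduct, vecMul, Fintype.sum_prod_type (α₁ := Fin m), X23b, Finset.mul_sum,
    Finset.sum_mul, ← Finset.sum_add_distrib]
  exact Finset.sum_congr rfl fun k _ => Finset.sum_congr rfl fun c _ =>
    Finset.sum_congr rfl fun p _ => by ring

lemma blk_quad {m N : ℕ} {β : Type*} [Fintype β] 
    (S : Fin m → Fin (N+1) → Matrix β β ℝ) (η : Fin m × (Fin (N+1) × β) → ℝ) :
    η ⬝ᵥ (Matrix.of fun p c : Fin m × (Fin (N+1) × β) =>
      if p.1 = c.1 ∧ p.2.1 = c.2.1 then S p.1 p.2.1 p.2.2 c.2.2 else 0) *ᵥ η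
    = ∑ k, ∑ j, (fun c => η (k, (j, c))) ⬝ᵥ S k j *ᵥ (fun c => η (k, (j, c))) := by
  rw [quad_sum]
  simp only [quad_sum, Fintype.sum_prod_type, of_apply, ite_and, ite_mul, zero_mul]
  refine Finset.sum_congr rfl fun k _ => Finset.sum_congr rfl fun j _ => Finset.sum_congr rfl fun b _ => ?_
  rw [Finset.sum_eq_single k (by intro k' _ h; simp [h.symm]) (by simp)]
  rw [Finset.sum_eq_single j (by intro k' _ h; simp [h.symm]) (by simp)]
  simp

lemma RW1_quad (m n N : ℕ) (τl : Fin m → ℝ)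
    (R1 : Fin m → Matrix (ag m n ⊕ ag m n) (ag m n ⊕ ag m n) ℝ)
    (W1 : Fin m → Matrix (ag m n) (ag m n) ℝ) (η : Fin m × kp m n N → ℝ) :
    η ⬝ᵥ RW1b m n N τl R1 W1 *ᵥ η = ∑ k, τl k * ∑ j : Fin (N+1), (2 * ((j:ℕ):ℝ) + 1) *
      ((fun c => η (k, (j, c))) ⬝ᵥ (R1 k + Wb m n (W1 k)) *ᵥ (fun c => η (k, (j, c)))) := by
  have := blk_quad (fun (k : Fin m) (j : Fin (N+1)) => (τl k * (2 * ((j:ℕ):ℝ) + 1)) • (R1 k + Wb m n (W1 k))) η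
  simp only [smul_mulVec, dotProduct_smul, smul_eq_mul] at this
  simp only [Finset.mul_sum, ← mul_assoc]
  simp only [mul_assoc] at this ⊢
  rw [← this]
  congr 2
  ext p c
  simp [RW1b, mul_assoc]

lemma RW23_quad (m n N : ℕ) (τl τu τv : Fin m → ℝ)
    (R2 : Fin m → Matrix (ag m n ⊕ ag m n) (ag m n ⊕ ag m n) ℝ)
    (W2 W3 : Fin m → Matrix (ag m n) (ag m n) ℝ) (η : Fin m × kp m n N → ℝ) :
    η ⬝ᵥ RW23b m n N τl τu τv R2 W2 W3 *ᵥ η = ∑ k, ((τv k - τl k) * ∑ j : Fin (N+1), (2 * ((j:ℕ):ℝ) + 1) *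
      ((fun c => η (k, (j, c))) ⬝ᵥ (R2 k + Wb m n (W2 k)) *ᵥ (fun c => η (k, (j, c)))) + 
      (τu k - τv k) * ∑ j : Fin (N+1), (2 * ((j:ℕ):ℝ) + 1) *
      ((fun c => η (k, (j, c))) ⬝ᵥ (R2 k + Wb m n (W3 k)) *ᵥ (fun c => η (k, (j, c))))) := by
  have := blk_quad (fun (k : Fin m) (j : Fin (N+1)) =>
    ((τv k - τl k) * (2 * ((j:ℕ):ℝ) + 1)) • (R2 k + Wb m n (W2 k)) + 
    ((τu k - τv k) * (2 * ((j:ℕ):ℝ) + 1)) • (R2 k + Wb m n (W3 k))) η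
  have e : ∀ (a b : ℝ) (S T : Matrix (ag m n ⊕ ag m n) (ag m n ⊕ ag m n) ℝ) (x),
      x ⬝ᵥ (a • S + b • T) *ᵥ x = a * (x ⬝ᵥ S *ᵥ x) + b * (x ⬝ᵥ T *ᵥ x) := by
    intro a b S T x
    rw [add_mulVec, smul_mulVec, smul_mulVec, dotProduct_add, dotProduct_smul, dotProduct_smul]; rfl
  simp only [e] at this
  simp only [Finset.mul_sum, ← Finset.sum_add_distrib, ← mul_assoc]
  simp only [mul_assoc] at this ⊢
  rw [← this]
  congr 2
  ext p c
  simp [RW23b]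
  split_ifs
  · ring
  · rfl

/-- `k`-th summand of the LMI quadratic form -/
noncomputable def TK (m n r N : ℕ) (A : Matrix (Fin n) (Fin n) ℝ) (adj : Fin m → Fin m → ℝ)
    (B : Matrix (Fin n) (Fin r) ℝ) (K : Matrix (Fin r) (Fin n) ℝ)
    (τl τu τv : Fin m → ℝ)
    (P : Fin m → Matrix (Fin 3 × ag m n) (Fin 3 × ag m n) ℝ)
    (Q1 Q2 : Fin m → Matrix (ag m n) (ag m n) ℝ)
    (R1 R2 : Fin m → Matrix (ag m n ⊕ ag m n) (ag m n ⊕ ag m n) ℝ)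
    (W1 W2 W3 : Fin m → Matrix (ag m n) (ag m n) ℝ)
    (Y : Fin 3 → Fin m → Fin (2 * N + 1) → Matrix (bg m n N) (ag m n) ℝ)
    (ζ : bg m n N → ℝ) (k : Fin m) (η1 η2 : kp m n N → ℝ) : ℝ :=
  pibarK m n r N A adj B K τl τu τv P Q1 Q2 R1 R2 W1 W2 W3 Y ζ k
  + 2 * (τl k * ((ζ ᵥ* Yb m n N Y 0 k) ⬝ᵥ η1))
  + 2 * ((τv k - τl k) * ((ζ ᵥ* Yb m n N Y 1 k) ⬝ᵥ η2)
        + (τu k - τv k) * ((ζ ᵥ* Yb m n N Y 2 k) ⬝ᵥ η2))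
  - τl k * ∑ j : Fin (N+1), (2 * ((j:ℕ):ℝ) + 1) *
      ((fun c => η1 (j, c)) ⬝ᵥ (R1 k + Wb m n (W1 k)) *ᵥ (fun c => η1 (j, c)))
  - ((τv k - τl k) * ∑ j : Fin (N+1), (2 * ((j:ℕ):ℝ) + 1) *
      ((fun c => η2 (j, c)) ⬝ᵥ (R2 k + Wb m n (W2 k)) *ᵥ (fun c => η2 (j, c))) + 
      (τu k - τv k) * ∑ j : Fin (N+1), (2 * ((j:ℕ):ℝ) + 1) *
      ((fun c => η2 (j, c)) ⬝ᵥ (R2 k + Wb m n (W3 k)) *ᵥ (fun c => η2 (j, c))))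

lemma LMI_quad (m n r N : ℕ) (A : Matrix (Fin n) (Fin n) ℝ) (adj : Fin m → Fin m → ℝ)
    (B : Matrix (Fin n) (Fin r) ℝ) (K : Matrix (Fin r) (Fin n) ℝ)
    (τl τu τv : Fin m → ℝ)
    (P : Fin m → Matrix (Fin 3 × ag m n) (Fin 3 × ag m n) ℝ)
    (Q1 Q2 : Fin m → Matrix (ag m n) (ag m n) ℝ)
    (R1 R2 : Fin m → Matrix (ag m n ⊕ ag m n) (ag m n ⊕ ag m n) ℝ)
    (W1 W2 W3 : Fin m → Matrix (ag m n) (ag m n) ℝ)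
    (Y : Fin 3 → Fin m → Fin (2 * N + 1) → Matrix (bg m n N) (ag m n) ℝ)
    (ζ : bg m n N → ℝ) (η1 η2 : Fin m → kp m n N → ℝ) :
    Sum.elim ζ (Sum.elim (fun c => η1 c.1 c.2) (fun c => η2 c.1 c.2)) ⬝ᵥ
      (LMImat m n r N A adj B K τl τu τv P Q1 Q2 R1 R2 W1 W2 W3 Y) *ᵥ
        Sum.elim ζ (Sum.elim (fun c => η1 c.1 c.2) (fun c => η2 c.1 c.2)) =
      ∑ k, TK m n r N A adj B K τl τu τv P Q1 Q2 R1 R2 W1 W2 W3 Y ζ k (η1 k) (η2 k) := by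
  set a : Fin m × kp m n N → ℝ := fun c => η1 c.1 c.2 with ha
  set b : Fin m × kp m n N → ℝ := fun c => η2 c.1 c.2 with hb
  have h : Sum.elim ζ (Sum.elim a b) ⬝ᵥ
      (LMImat m n r N A adj B K τl τu τv P Q1 Q2 R1 R2 W1 W2 W3 Y) *ᵥ
        Sum.elim ζ (Sum.elim a b) = 
      ζ ⬝ᵥ (PibarT m n r N A adj B K τl τu τv P Q1 Q2 R1 R2 W1 W2 W3 Y) *ᵥ ζ
      + 2 * (ζ ⬝ᵥ X1b m n N τl Y *ᵥ a) + 2 * (ζ ⬝ᵥ X23b m n N τl τu τv Y *ᵥ b)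
      - a ⬝ᵥ RW1b m n N τl R1 W1 *ᵥ a - b ⬝ᵥ RW23b m n N τl τu τv R2 W2 W3 *ᵥ b := by
    have e1 : (Matrix.of fun (p : bg m n N) (c : (Fin m × kp m n N) ⊕ (Fin m × kp m n N)) =>
        Sum.elim (X1b m n N τl Y p) (X23b m n N τl τu τv Y p) c) = 
        fromCols (X1b m n N τl Y) (X23b m n N τl τu τv Y) := by
      ext p c; cases c <;> rfl
    have e2 : (Matrix.of fun (p : (Fin m × kp m n N) ⊕ (Fin m × kp m n N)) (c : bg m n N) =>
        Sum.elim (X1b m n N τl Y c) (X23b m n N τl τu τv Y c) p) = 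
        fromRows (X1b m n N τl Y)ᵀ (X23b m n N τl τu τv Y)ᵀ := by
      ext p c; cases p <;> rfl
    unfold LMImat
    rw [e1, e2]
    simp only [fromBlocks_mulVec, Sum.elim_comp_inl, Sum.elim_comp_inr, fromCols_mulVec_sumElim, fromRows_mulVec,
      sumElim_dotProduct_sumElim, neg_mulVec, zero_mulVec, dotProduct_add, dotProduct_neg, add_zero, zero_add,
      mulVec_transpose]
    rw [dotProduct_mulVec ζ (X1b m n N τl Y), dotProduct_mulVec ζ (X23b m n N τl τu τv Y), 
      dotProduct_comm a, dotProduct_comm b]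
    ring
  rw [h, pibar_quad, X1_quad, X23_quad, RW1_quad, RW23_quad]
  rw [Finset.mul_sum, Finset.mul_sum, ← Finset.sum_add_distrib, ← Finset.sum_add_distrib,
    ← Finset.sum_sub_distrib, ← Finset.sum_sub_distrib]
  rfl

/-- Augmented vector assembled from its blocks. -/
def zet (m n N : ℕ) (hm : 0 < m) (z0 : ag m n → ℝ) (cmp : ℕ → Fin m → ag m n → ℝ) :
    bg m n N → ℝ := fun p =>
  if (p.1 : ℕ) = 0 then z0 p.2 else cmp (((p.1 : ℕ) - 1) / m) ⟨((p.1 : ℕ) - 1) % m, Nat.mod_lt _ hm⟩ p.2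

lemma vecMul_eB (m n N : ℕ) (ζ : bg m n N → ℝ) (f : ℕ) (hf : f < 1 + (3 + 3 * N) * m) :
    ζ ᵥ* eB m n N (f + 1) = fun j => ζ (⟨f, hf⟩, j) := by
  funext j
  simp only [vecMul, dotProduct, eB]
  rw [Finset.sum_eq_single (⟨f, hf⟩, j)]
  · simp
  · rintro ⟨a, b⟩ _ h
    have : ¬ ((a : ℕ) + 1 = f + 1 ∧ b = j) := by
      rintro ⟨h1, h2⟩
      apply h
      have : a = ⟨f, hf⟩ := Fin.ext (by simpa using h1)
      rw [this, h2]
    rw [if_neg this, mul_zero]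
  · simp

lemma zet_one (m n N : ℕ) (hm : 0 < m) (z0 : ag m n → ℝ) (cmp : ℕ → Fin m → ag m n → ℝ) :
    zet m n N hm z0 cmp ᵥ* eB m n N 1 = z0 := by
  rw [vecMul_eB m n N _ 0 (by omega)]
  funext j; simp [zet]

lemma zet_blk (m n N : ℕ) (hm : 0 < m) (z0 : ag m n → ℝ) (cmp : ℕ → Fin m → ag m n → ℝ)
    (q : ℕ) (hq : q < 3 + 3 * N) (k : Fin m) :
    zet m n N hm z0 cmp ᵥ* eB m n N (q * m + (k : ℕ) + 2) = cmp q k := by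
  have hk := k.isLt
  have hb : q * m + (k:ℕ) + 1 < 1 + (3 + 3 * N) * m := by
    have : (q + 1) * m ≤ (3 + 3 * N) * m := Nat.mul_le_mul_right _ hq
    nlinarith
  rw [vecMul_eB m n N _ (q * m + (k : ℕ) + 1) hb]
  funext j
  have h1 : (q * m + (k:ℕ)) / m = q := by
    rw [add_comm, Nat.add_mul_div_right _ _ hm, Nat.div_eq_of_lt hk, zero_add]
  have h2 : (q * m + (k:ℕ)) % m = k := by
    rw [add_comm, Nat.add_mul_mod_self_right, Nat.mod_eq_of_lt hk]
  simp [zet, h1, h2]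

noncomputable def cmpz (m n N : ℕ) (z : ℝ → ag m n → ℝ) (t : ℝ) (τl τu τt : Fin m → ℝ)
    (q : ℕ) (k : Fin m) : ag m n → ℝ :=
  if q = 0 then z (t - τl k) else if q = 1 then z (t - τu k) else if q = 2 then z (t - τt k)
  else if q < 3 + N then muL z (t - τl k) (τl k) (q - 3)
  else if q < 3 + 2 * N then muL z (t - τt k) (τt k - τl k) (q - 3 - N)
  else muL z (t - τu k) (τu k - τt k) (q - 3 - 2 * N)

noncomputable def zetz (m n N : ℕ) (hm : 0 < m) (z : ℝ → ag m n → ℝ) (t : ℝ) (τl τu τt : Fin m → ℝ) :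
    bg m n N → ℝ := zet m n N hm (z t) (cmpz m n N z t τl τu τt)

def segA (m : ℕ) (t : ℝ) (τl τu τt : Fin m → ℝ) (x : Fin 3) (k : Fin m) : ℝ :=
  if x = 0 then t - τl k else if x = 1 then t - τt k else t - τu k
def segB (m : ℕ) (t : ℝ) (τl _τu τt : Fin m → ℝ) (x : Fin 3) (k : Fin m) : ℝ :=
  if x = 0 then t else if x = 1 then t - τl k else t - τt k

lemma seg_add (m : ℕ) (t : ℝ) (τl τu τt : Fin m → ℝ) (x : Fin 3) (k : Fin m) :
    segA m t τl τu τt x k + coefM m τl τu τt x k = segB m t τl τu τt x k := by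
  unfold segA segB coefM
  split_ifs <;> ring


lemma zetz_one (m n N : ℕ) (hm : 0 < m) (z : ℝ → ag m n → ℝ) (t : ℝ) (τl τu τt : Fin m → ℝ)
    : zetz m n N hm z t τl τu τt ᵥ* eB m n N 1 = z t := zet_one ..

lemma zetz_l (m n N : ℕ) (hm : 0 < m) (z : ℝ → ag m n → ℝ) (t : ℝ) (τl τu τt : Fin m → ℝ)
    (k : Fin m) : zetz m n N hm z t τl τu τt ᵥ* eB m n N ((k:ℕ) + 2) = z (t - τl k) := by
  have := zet_blk m n N hm (z t) (cmpz m n N z t τl τu τt) 0 (by omega) k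
  unfold zetz
  simpa [cmpz] using this

lemma zetz_u (m n N : ℕ) (hm : 0 < m) (z : ℝ → ag m n → ℝ) (t : ℝ) (τl τu τt : Fin m → ℝ)
    (k : Fin m) : zetz m n N hm z t τl τu τt ᵥ* eB m n N (m + (k:ℕ) + 2) = z (t - τu k) := by
  have := zet_blk m n N hm (z t) (cmpz m n N z t τl τu τt) 1 (by omega) k
  unfold zetz
  simpa [cmpz] using this

lemma zetz_t (m n N : ℕ) (hm : 0 < m) (z : ℝ → ag m n → ℝ) (t : ℝ) (τl τu τt : Fin m → ℝ)
    (k : Fin m) : zetz m n N hm z t τl τu τt ᵥ* eB m n N (2 * m + (k:ℕ) + 2) = z (t - τt k) := by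
  have := zet_blk m n N hm (z t) (cmpz m n N z t τl τu τt) 2 (by omega) k
  unfold zetz
  simpa [cmpz] using this

lemma zetz_even (m n N : ℕ) (hm : 0 < m) (z : ℝ → ag m n → ℝ) (t : ℝ) (τl τu τt : Fin m → ℝ)
    (x : Fin 3) (k : Fin m) (i : ℕ) (hi : i < N) :
    zetz m n N hm z t τl τu τt ᵥ* eEven m n N x k i =
      muL z (segA m t τl τu τt x k) (coefM m τl τu τt x k) i := by
  unfold eEven segA coefM
  split_ifs
  · rw [zetz, zet_blk m n N hm _ _ _ (by omega), cmpz]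
    rw [if_neg (by omega), if_neg (by omega), if_neg (by omega), if_pos (by omega)]
    congr 1; omega
  · rw [zetz, zet_blk m n N hm _ _ _ (by omega), cmpz]
    rw [if_neg (by omega), if_neg (by omega), if_neg (by omega), if_neg (by omega), if_pos (by omega)]
    congr 1; omega
  · rw [zetz, zet_blk m n N hm _ _ _ (by omega), cmpz]
    rw [if_neg (by omega), if_neg (by omega), if_neg (by omega), if_neg (by omega), if_neg (by omega)]
    congr 1; omega

lemma zetz_rho (m n N : ℕ) (hm : 0 < m) (z : ℝ → ag m n → ℝ) (t : ℝ) (τl τu τt : Fin m → ℝ)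
    (x : Fin 3) (k : Fin m) (i : ℕ) (hi : i ≤ N) (p : ag m n) :
    (zetz m n N hm z t τl τu τt ᵥ* rho m n N x k i) p =
      z (segB m t τl τu τt x k) p - (if i = 0 then z (segA m t τl τu τt x k) p else
        (i:ℝ) * muL z (segA m t τl τu τt x k) (coefM m τl τu τt x k) (i - 1) p) := by
  by_cases h0 : i = 0
  · subst h0
    unfold rho segA segB
    by_cases hx : x = 0
    · simp [hx, vecMul_sub, zetz_one, zetz_l]
    · by_cases hx1 : x = 1
      · simp [hx1, vecMul_sub, zetz_t, zetz_l]
      · simp [hx, hx1, vecMul_sub, zetz_t, zetz_u]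
  · obtain ⟨i, rfl⟩ : ∃ i', i = i' + 1 := ⟨i - 1, by omega⟩
    have he := zetz_even m n N hm z t τl τu τt x k i (by omega)
    simp only [h0, if_false, Nat.add_sub_cancel]
    rw [← he]
    unfold rho segB eEven
    by_cases hx : x = 0
    · simp only [hx, if_true, h0, if_false]
      rw [show 2 + (i + 1) = 3 + i by ring, vecMul_sub, vecMul_smul, zetz_one]; rfl
    · by_cases hx1 : x = 1
      · rw [if_neg hx, if_neg hx, if_neg hx, if_pos hx1, if_pos hx1, if_pos hx1, if_neg h0]
        rw [show 2 + (i + 1) + N = 3 + i + N by ring, vecMul_sub, vecMul_smul]; simp [zetz_l]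
      · simp only [hx, hx1, h0, if_false]
        rw [show 2 + (i + 1) + 2 * N = 3 + i + 2 * N by ring, vecMul_sub, vecMul_smul]; simp [zetz_t]

lemma vecMul_fsum {ι κ : Type*} [Fintype ι] (ζ : ι → ℝ) (s : Finset ℕ) (g : ℕ → ℝ) (M : ℕ → Matrix ι κ ℝ)
    (p : κ) : (ζ ᵥ* ∑ i ∈ s, g i • M i) p = ∑ i ∈ s, g i * (ζ ᵥ* M i) p := by
  simp only [vecMul, dotProduct, Matrix.sum_apply, Matrix.smul_apply, smul_eq_mul, Finset.mul_sum]
  rw [Finset.sum_comm]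
  exact Finset.sum_congr rfl fun i _ => Finset.sum_congr rfl fun j _ => by ring

lemma zetz_Mb (m n N : ℕ) (hm : 0 < m) (z : ℝ → ag m n → ℝ) (t : ℝ) (τl τu τt : Fin m → ℝ) (zd : ℝ → ag m n → ℝ)
    (hz : ∀ a t, HasDerivAt (fun s => z s a) (zd t a) t)
    (hzd : ∀ a, Continuous fun s => zd s a)
    (τv : Fin m → ℝ) (x : Fin 3) (k : Fin m) (j : Fin (N+1)) :
    (∀ p, (zetz m n N hm z t τl τu τt ᵥ* Mb m n N τl τu τv x k) (j, Sum.inl p) =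
      coefM m τl τu τt x k * OmL z zd (segA m t τl τu τt x k) (coefM m τl τu τt x k) j (Sum.inl p)) ∧
    (∀ p, (zetz m n N hm z t τl τu τt ᵥ* Mb m n N τl τu τv x k) (j, Sum.inr p) =
      if (j:ℕ) < N then 
      coefM m τl τu τv x k * OmL z zd (segA m t τl τu τt x k) (coefM m τl τu τt x k) j (Sum.inr p) else 0) := by
  have hzc : ∀ a, Continuous fun s => z s a := fun a =>
    continuous_iff_continuousAt.2 fun t => (hz a t).continuousAt
  constructor
  · intro p
    have e : (zetz m n N hm z t τl τu τt ᵥ* Mb m n N τl τu τv x k) (j, Sum.inl p) = 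
      (zetz m n N hm z t τl τu τt ᵥ* Modd m n N x k ((j:ℕ)+1)) p := rfl
    rw [e, Modd, vecMul_fsum, OmL_inl z zd hz hzd, seg_add]
    refine Finset.sum_congr rfl fun i hi => ?_
    rw [zetz_rho]
    have := Finset.mem_range.1 hi
    omega
  · intro p
    split_ifs with h
    · have e : (zetz m n N hm z t τl τu τt ᵥ* Mb m n N τl τu τv x k) (j, Sum.inr p) = 
        (zetz m n N hm z t τl τu τt ᵥ* Meven m n N τl τu τv x k ((j:ℕ)+1)) p := by
        simp [vecMul, dotProduct, Mb, h]
      rw [e, Meven, vecMul_smul, Pi.smul_apply, vecMul_fsum, OmL_inr z zd hzc, smul_eq_mul]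
      congr 1
      refine Finset.sum_congr rfl fun i hi => ?_
      rw [zetz_even]
      have := Finset.mem_range.1 hi
      omega
    · simp [vecMul, dotProduct, Mb, h]

def aS {m n N : ℕ} (y : kp m n N → ℝ) (O : ℕ → ag m n ⊕ ag m n → ℝ) : ℝ :=
  ∑ j : Fin (N+1), ∑ p, y (j, Sum.inl p) * O j (Sum.inl p)
def bS {m n N : ℕ} (y : kp m n N → ℝ) (O : ℕ → ag m n ⊕ ag m n → ℝ) : ℝ :=
  ∑ j : Fin (N+1), ∑ p, y (j, Sum.inr p) * O j (Sum.inr p)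

lemma dot_neg_O {m n N : ℕ} (y : kp m n N → ℝ) (O : ℕ → ag m n ⊕ ag m n → ℝ) :
    y ⬝ᵥ (fun c => -(O c.1 c.2)) = -(aS y O + bS y O) := by
  rw [dotProduct, Fintype.sum_prod_type]
  simp only [Fintype.sum_sum_type, aS, bS, Finset.sum_add_distrib, mul_neg, Finset.sum_neg_distrib, neg_add]

lemma dot_Mb (m n N : ℕ) (hm : 0 < m) (z : ℝ → ag m n → ℝ) (t : ℝ) (τl τu τt : Fin m → ℝ) (zd : ℝ → ag m n → ℝ)
    (hz : ∀ a t, HasDerivAt (fun s => z s a) (zd t a) t)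
    (hzd : ∀ a, Continuous fun s => zd s a)
    (Y : Fin 3 → Fin m → Fin (2 * N + 1) → Matrix (bg m n N) (ag m n) ℝ)
    (ζ : bg m n N → ℝ) (τv : Fin m → ℝ) (x : Fin 3) (k : Fin m) :
    (ζ ᵥ* Yb m n N Y x k) ⬝ᵥ (zetz m n N hm z t τl τu τt ᵥ* Mb m n N τl τu τv x k) =
      coefM m τl τu τt x k * aS (ζ ᵥ* Yb m n N Y x k) 
        (OmL z zd (segA m t τl τu τt x k) (coefM m τl τu τt x k)) +
      coefM m τl τu τv x k * bS (ζ ᵥ* Yb m n N Y x k) 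
        (OmL z zd (segA m t τl τu τt x k) (coefM m τl τu τt x k)) := by
  have h := zetz_Mb m n N hm z t τl τu τt zd hz hzd τv x k
  rw [dotProduct, Fintype.sum_prod_type]
  simp only [Fintype.sum_sum_type, aS, bS, Finset.sum_add_distrib, Finset.mul_sum]
  congr 1
  · refine Finset.sum_congr rfl fun j _ => Finset.sum_congr rfl fun p _ => ?_
    rw [(h j).1 p]; ring
  · refine Finset.sum_congr rfl fun j _ => Finset.sum_congr rfl fun p _ => ?_
    rw [(h j).2 p]
    split_ifs with hj
    · ring
    · have : (ζ ᵥ* Yb m n N Y x k) (j, Sum.inr p) = 0 := by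
        have h0 : ∀ q, Yb m n N Y x k q (j, Sum.inr p) = 0 := fun q =>
          dif_neg (by show ¬ (2 * (j:ℕ) + 1 < 2 * N + 1); omega)
        simp only [vecMul, dotProduct, h0, mul_zero, Finset.sum_const_zero]
      rw [this]; simp


lemma zetz_dyn (m n r N : ℕ) (hm : 0 < m) (A : Matrix (Fin n) (Fin n) ℝ) (adj : Fin m → Fin m → ℝ)
    (B : Matrix (Fin n) (Fin r) ℝ) (K : Matrix (Fin r) (Fin n) ℝ)
    (z : ℝ → ag m n → ℝ) (t : ℝ) (τl τu τt : Fin m → ℝ) :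
    zetz m n N hm z t τl τu τt ᵥ* dynRow m n r N A adj B K =
      Abar m n A *ᵥ z t - ∑ k, Bbar m n r adj B K k *ᵥ z (t - τt k) := by
  have hs : ∀ (ζ : bg m n N → ℝ) (M : Fin m → Matrix (bg m n N) (ag m n) ℝ),
      ζ ᵥ* (∑ k, M k) = ∑ k, ζ ᵥ* M k := by
    intro ζ M
    funext p
    simp only [vecMul, dotProduct, Matrix.sum_apply, Finset.sum_apply, Finset.mul_sum]
    rw [Finset.sum_comm]
  unfold dynRow
  rw [vecMul_sub, hs, ← vecMul_vecMul, zetz_one, vecMul_transpose]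
  congr 1
  refine Finset.sum_congr rfl fun k _ => ?_
  rw [← vecMul_vecMul, zetz_t, vecMul_transpose]

lemma zetz_Pi3 (m n r N : ℕ) (hm : 0 < m) (A : Matrix (Fin n) (Fin n) ℝ) (adj : Fin m → Fin m → ℝ)
    (B : Matrix (Fin n) (Fin r) ℝ) (K : Matrix (Fin r) (Fin n) ℝ)
    (z zd : ℝ → ag m n → ℝ) (t : ℝ) (τl τu τt : Fin m → ℝ)
    (hd : zetz m n N hm z t τl τu τt ᵥ* dynRow m n r N A adj B K = zd t) :
    zetz m n N hm z t τl τu τt ᵥ* Pi3 m n r N A adj B K = omg z zd t := by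
  funext c
  cases c with
  | inl p => exact congrFun hd p
  | inr p => exact congrFun (zetz_one m n N hm z t τl τu τt) p

lemma zetz_Pi2 (m n r N : ℕ) (hm : 0 < m) (A : Matrix (Fin n) (Fin n) ℝ) (adj : Fin m → Fin m → ℝ)
    (B : Matrix (Fin n) (Fin r) ℝ) (K : Matrix (Fin r) (Fin n) ℝ)
    (z zd : ℝ → ag m n → ℝ) (t : ℝ) (τl τu τt : Fin m → ℝ)
    (hd : zetz m n N hm z t τl τu τt ᵥ* dynRow m n r N A adj B K = zd t) (k : Fin m) :
    zetz m n N hm z t τl τu τt ᵥ* Pi2 m n r N A adj B K k = vpD z zd (τl k) (τu k) t := by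
  funext ⟨i, p⟩
  have h1 : zetz m n N hm z t τl τu τt ᵥ* (eB m n N 1 - eB m n N ((k : ℕ) + 2)) =
      z t - z (t - τl k) := by rw [vecMul_sub, zetz_one, zetz_l]
  have h2 : zetz m n N hm z t τl τu τt ᵥ* (eB m n N ((k : ℕ) + 2) - eB m n N (m + (k : ℕ) + 2)) =
      z (t - τl k) - z (t - τu k) := by rw [vecMul_sub, zetz_l, zetz_u]
  fin_cases i
  · exact congrFun hd p
  · exact congrFun h1 p
  · exact congrFun h2 p

lemma zetz_Pi1 (m n N : ℕ) (hm : 0 < m) (hN : 1 ≤ N) (z : ℝ → ag m n → ℝ) 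
    (hzc : ∀ a, Continuous fun s => z s a) (t : ℝ) (τl τu τt : Fin m → ℝ)
    (k : Fin m) (τA τB : Fin m → ℝ) (hA : τA k = τu k) (hB : τB k = τl k) :
    (τt k - τl k) • (zetz m n N hm z t τl τu τt ᵥ* Pi1 m n N τl τu τA k) +
    (τu k - τt k) • (zetz m n N hm z t τl τu τt ᵥ* Pi1 m n N τl τu τB k) =
    (τu k - τl k) • vpF z (τl k) (τu k) t := by
  have e0 := zetz_even m n N hm z t τl τu τt 0 k 0 (by omega)
  have e1 := zetz_even m n N hm z t τl τu τt 1 k 0 (by omega)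
  have e2 := zetz_even m n N hm z t τl τu τt 2 k 0 (by omega)
  set ζ := zetz m n N hm z t τl τu τt with hζ
  funext ⟨i, p⟩
  have m0 := mu_zero z (t - τl k) (τl k) t (by ring) p
  have m1 := mu_zero z (t - τt k) (τt k - τl k) (t - τl k) (by ring) p
  have m2 := mu_zero z (t - τu k) (τu k - τt k) (t - τt k) (by ring) p
  have hadd := intervalIntegral.integral_add_adjacent_intervals
    ((hzc p).intervalIntegrable (μ := MeasureTheory.volume) (t - τu k) (t - τt k)) ((hzc p).intervalIntegrable (t - τt k) (t - τl k))
  have q0 : ∀ τv : Fin m → ℝ, (ζ ᵥ* Pi1 m n N τl τu τv k) (0, p) = z t p := fun τv =>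
    congrFun (zetz_one m n N hm z t τl τu τt) p
  have q1 : ∀ τv : Fin m → ℝ, (ζ ᵥ* Pi1 m n N τl τu τv k) (1, p) = τl k * muL z (t - τl k) (τl k) 0 p := by
    intro τv
    have : (ζ ᵥ* Pi1 m n N τl τu τv k) (1, p) = (ζ ᵥ* (τl k • eEven m n N 0 k 0)) p := rfl
    rw [this, vecMul_smul, e0]; rfl
  have q2 : ∀ τv : Fin m → ℝ, (ζ ᵥ* Pi1 m n N τl τu τv k) (2, p) =
      (τv k - τl k) * muL z (t - τt k) (τt k - τl k) 0 p + (τu k - τv k) * muL z (t - τu k) (τu k - τt k) 0 p := by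
    intro τv
    have : (ζ ᵥ* Pi1 m n N τl τu τv k) (2, p) = (ζ ᵥ* ((τv k - τl k) • eEven m n N 1 k 0
      + (τu k - τv k) • eEven m n N 2 k 0)) p := by
      simp [vecMul, dotProduct, Pi1, eEven]
    rw [this, vecMul_add, vecMul_smul, vecMul_smul, e1, e2]; rfl
  simp only [Pi.add_apply, Pi.smul_apply, smul_eq_mul]
  fin_cases i
  · simp only [Fin.zero_eta, Fin.mk_one, Fin.reduceFinMk]
    rw [q0, q0]
    simp only [vpF, if_true]
    ring
  · simp only [Fin.zero_eta, Fin.mk_one, Fin.reduceFinMk]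
    rw [q1, q1, m0]
    simp [vpF]
    ring
  · simp only [Fin.zero_eta, Fin.mk_one, Fin.reduceFinMk]
    rw [q2, q2, hA, hB]
    simp only [vpF]
    rw [if_neg (by decide), if_neg (by decide), ← hadd, ← m1, ← m2]
    ring

lemma neg_quad {β : Type*} [Fintype β] (R : Matrix β β ℝ) (O : β → ℝ) :
    (fun c => -(O c)) ⬝ᵥ R *ᵥ (fun c => -(O c)) = O ⬝ᵥ R *ᵥ O := by
  have : (fun c => -(O c)) = -O := rfl
  rw [this, mulVec_neg, neg_dotProduct_neg]

lemma key_ineq (m n r N : ℕ) (hm : 0 < m) (hN : 1 ≤ N) (A : Matrix (Fin n) (Fin n) ℝ) (adj : Fin m → Fin m → ℝ)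
    (B : Matrix (Fin n) (Fin r) ℝ) (K : Matrix (Fin r) (Fin n) ℝ)
    (τl τu τt : Fin m → ℝ)
    (P : Fin m → Matrix (Fin 3 × ag m n) (Fin 3 × ag m n) ℝ)
    (Q1 Q2 : Fin m → Matrix (ag m n) (ag m n) ℝ)
    (R1 R2 : Fin m → Matrix (ag m n ⊕ ag m n) (ag m n ⊕ ag m n) ℝ)
    (W1 W2 W3 : Fin m → Matrix (ag m n) (ag m n) ℝ)
    (Y : Fin 3 → Fin m → Fin (2 * N + 1) → Matrix (bg m n N) (ag m n) ℝ)
    (z zd : ℝ → ag m n → ℝ) (t : ℝ)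
    (hz : ∀ a t, HasDerivAt (fun s => z s a) (zd t a) t)
    (hzd : ∀ a, Continuous fun s => zd s a)
    (hd : zetz m n N hm z t τl τu τt ᵥ* dynRow m n r N A adj B K = zd t)
    (hW1 : ∀ k, (W1 k).IsSymm) (hW2 : ∀ k, (W2 k).IsSymm) (hW3 : ∀ k, (W3 k).IsSymm)
    (hRW1 : ∀ k, (R1 k + Wb m n (W1 k)).PosDef)
    (hRW2 : ∀ k, (R2 k + Wb m n (W2 k)).PosDef)
    (hRW3 : ∀ k, (R2 k + Wb m n (W3 k)).PosDef)
    (k : Fin m) (h0 : 0 ≤ τl k) (h1 : τl k ≤ τt k) (h2 : τt k ≤ τu k)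
    (τA τB : Fin m → ℝ) (hA : τA k = τu k) (hB : τB k = τl k) :
    (τu k - τl k) * VkD z zd (P k) (Q1 k) (Q2 k) (R1 k) (R2 k) (τl k) (τu k) t ≤
    (τt k - τl k) * TK m n r N A adj B K τl τu τA P Q1 Q2 R1 R2 W1 W2 W3 Y
      (zetz m n N hm z t τl τu τt) k
      (fun c => -(OmL z zd (segA m t τl τu τt 0 k) (coefM m τl τu τt 0 k) c.1 c.2))
      (fun c => -(OmL z zd (segA m t τl τu τt 1 k) (coefM m τl τu τt 1 k) c.1 c.2)) +
    (τu k - τt k) * TK m n r N A adj B K τl τu τB P Q1 Q2 R1 R2 W1 W2 W3 Y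
      (zetz m n N hm z t τl τu τt) k
      (fun c => -(OmL z zd (segA m t τl τu τt 0 k) (coefM m τl τu τt 0 k) c.1 c.2))
      (fun c => -(OmL z zd (segA m t τl τu τt 2 k) (coefM m τl τu τt 2 k) c.1 c.2)) := by
  have hzc : ∀ a, Continuous fun s => z s a := fun a =>
    continuous_iff_continuousAt.2 fun t => (hz a t).continuousAt
  have hp := zetz_Pi1 m n N hm hN z hzc t τl τu τt k τA τB hA hB
  have hpp := congrArg (fun v => vpD z zd (τl k) (τu k) t ⬝ᵥ P k *ᵥ v) hp
  simp only [mulVec_add, mulVec_smul, dotProduct_add, dotProduct_smul, smul_eq_mul] at hpp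
  have b0 := bessel_seg z zd hzc hzd N _ (hRW1 k) (t - τl k) (τl k) t h0 (by ring)
  have b1 := bessel_seg z zd hzc hzd N _ (hRW2 k) (t - τt k) (τt k - τl k) (t - τl k) (by linarith) (by ring)
  have b2 := bessel_seg z zd hzc hzd N _ (hRW3 k) (t - τu k) (τu k - τt k) (t - τt k) (by linarith) (by ring)
  rw [Wb_int m n _ (hW1 k) z zd hz hzd] at b0
  rw [Wb_int m n _ (hW2 k) z zd hz hzd] at b1
  rw [Wb_int m n _ (hW3 k) z zd hz hzd] at b2
  have hcq := cont_quad (R2 k) _ (omg_cont z zd hzc hzd)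
  have hadd := intervalIntegral.integral_add_adjacent_intervals
    (hcq.intervalIntegrable (μ := MeasureTheory.volume) (t - τu k) (t - τt k)) (hcq.intervalIntegrable (t - τt k) (t - τl k))
  have bb := mul_le_mul_of_nonneg_left (add_le_add b0 (add_le_add b1 b2)) (by linarith : 0 ≤ τu k - τl k)
  unfold TK pibarK VkD
  simp only [dot_Mb m n N hm z t τl τu τt zd hz hzd Y]
  rw [zetz_Pi2 m n r N hm A adj B K z zd t τl τu τt hd, zetz_Pi3 m n r N hm A adj B K z zd t τl τu τt hd,
    zetz_one, zetz_l, zetz_u, zetz_t]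
  simp only [dot_neg_O, neg_quad]
  have s0 : segA m t τl τu τt 0 k = t - τl k := rfl
  have s1 : segA m t τl τu τt 1 k = t - τt k := rfl
  have s2 : segA m t τl τu τt 2 k = t - τu k := rfl
  have c0 : ∀ τv, coefM m τl τu τv 0 k = τl k := fun _ => rfl
  have c1 : ∀ τv, coefM m τl τu τv 1 k = τv k - τl k := fun _ => rfl
  have c2 : ∀ τv, coefM m τl τu τv 2 k = τu k - τv k := fun _ => rfl
  simp only [s0, s1, s2, c0, c1, c2, hA, hB]
  simp only [add_mulVec, sub_mulVec, smul_mulVec, dotProduct_add, dotProduct_sub, dotProduct_smul, smul_eq_mul] at bb ⊢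
  simp only [sub_self, zero_mul, add_zero, zero_add, mul_zero]
  rw [← hadd]
  linear_combination bb - 2 * hpp

lemma TK_congr (m n r N : ℕ) (A : Matrix (Fin n) (Fin n) ℝ) (adj : Fin m → Fin m → ℝ)
    (B : Matrix (Fin n) (Fin r) ℝ) (K : Matrix (Fin r) (Fin n) ℝ)
    (τl τu τv τw : Fin m → ℝ)
    (P : Fin m → Matrix (Fin 3 × ag m n) (Fin 3 × ag m n) ℝ)
    (Q1 Q2 : Fin m → Matrix (ag m n) (ag m n) ℝ)
    (R1 R2 : Fin m → Matrix (ag m n ⊕ ag m n) (ag m n ⊕ ag m n) ℝ)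
    (W1 W2 W3 : Fin m → Matrix (ag m n) (ag m n) ℝ)
    (Y : Fin 3 → Fin m → Fin (2 * N + 1) → Matrix (bg m n N) (ag m n) ℝ)
    (ζ : bg m n N → ℝ) (k : Fin m) (η1 η2 : kp m n N → ℝ) (h : τv k = τw k) :
    TK m n r N A adj B K τl τu τv P Q1 Q2 R1 R2 W1 W2 W3 Y ζ k η1 η2 =
    TK m n r N A adj B K τl τu τw P Q1 Q2 R1 R2 W1 W2 W3 Y ζ k η1 η2 := by
  have e1 : Pi1 m n N τl τu τv k = Pi1 m n N τl τu τw k := by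
    unfold Pi1; rw [h]
  have e2 : ∀ x, Mb m n N τl τu τv x k = Mb m n N τl τu τw x k := by
    intro x; unfold Mb Meven coefM; rw [h]
  unfold TK pibarK
  rw [e1, e2, e2, e2, h]

lemma tau_lt (m n r N : ℕ) (hm : 2 ≤ m) (hn : 1 ≤ n) (A : Matrix (Fin n) (Fin n) ℝ) (adj : Fin m → Fin m → ℝ)
    (B : Matrix (Fin n) (Fin r) ℝ) (K : Matrix (Fin r) (Fin n) ℝ)
    (τl τu : Fin m → ℝ)
    (P : Fin m → Matrix (Fin 3 × ag m n) (Fin 3 × ag m n) ℝ)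
    (Q1 Q2 : Fin m → Matrix (ag m n) (ag m n) ℝ)
    (R1 R2 : Fin m → Matrix (ag m n ⊕ ag m n) (ag m n ⊕ ag m n) ℝ)
    (W1 W2 W3 : Fin m → Matrix (ag m n) (ag m n) ℝ)
    (Y : Fin 3 → Fin m → Fin (2 * N + 1) → Matrix (bg m n N) (ag m n) ℝ)
    (hL : (-(LMImat m n r N A adj B K τl τu τl P Q1 Q2 R1 R2 W1 W2 W3 Y)).PosDef)
    (k : Fin m) : τu k ≠ τl k := by
  intro h
  let p : ag m n := (⟨0, by omega⟩, ⟨0, by omega⟩)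
  have := hL.diag_pos (i := Sum.inr (Sum.inr (k, ((0 : Fin (N+1)), Sum.inl p))))
  simp [LMImat, RW23b, h] at this

lemma vdot_bound (m n r N : ℕ) (hm : 2 ≤ m) (hn : 1 ≤ n) (hN : 1 ≤ N)
    (A : Matrix (Fin n) (Fin n) ℝ) (adj : Fin m → Fin m → ℝ)
    (B : Matrix (Fin n) (Fin r) ℝ) (K : Matrix (Fin r) (Fin n) ℝ)
    (τl τu : Fin m → ℝ)
    (P : Fin m → Matrix (Fin 3 × ag m n) (Fin 3 × ag m n) ℝ)
    (Q1 Q2 : Fin m → Matrix (ag m n) (ag m n) ℝ)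
    (R1 R2 : Fin m → Matrix (ag m n ⊕ ag m n) (ag m n ⊕ ag m n) ℝ)
    (W1 W2 W3 : Fin m → Matrix (ag m n) (ag m n) ℝ)
    (Y : Fin 3 → Fin m → Fin (2 * N + 1) → Matrix (bg m n N) (ag m n) ℝ)
    (hW1 : ∀ k, (W1 k).IsSymm) (hW2 : ∀ k, (W2 k).IsSymm) (hW3 : ∀ k, (W3 k).IsSymm)
    (hRW1 : ∀ k, (R1 k + Wb m n (W1 k)).PosDef)
    (hRW2 : ∀ k, (R2 k + Wb m n (W2 k)).PosDef)
    (hRW3 : ∀ k, (R2 k + Wb m n (W3 k)).PosDef)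
    (hLMI : ∀ τv : Fin m → ℝ, (∀ k, τv k = τl k ∨ τv k = τu k) →
      (-(LMImat m n r N A adj B K τl τu τv P Q1 Q2 R1 R2 W1 W2 W3 Y)).PosDef)
    (z zd : ℝ → ag m n → ℝ)
    (hz : ∀ a t, HasDerivAt (fun s => z s a) (zd t a) t)
    (hzd : ∀ a, Continuous fun s => zd s a) :
    ∃ c : ℝ, 0 < c ∧ ∀ (t : ℝ) (τt : Fin m → ℝ), (∀ k, 0 ≤ τl k ∧ τl k ≤ τt k ∧ τt k ≤ τu k) →
      zetz m n N (by omega) z t τl τu τt ᵥ* dynRow m n r N A adj B K = zd t →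
      ∑ k, VkD z zd (P k) (Q1 k) (Q2 k) (R1 k) (R2 k) (τl k) (τu k) t ≤
        -(c * ‖zetz m n N (by omega) z t τl τu τt‖ ^ 2) := by
  let τσ : (Fin m → Bool) → Fin m → ℝ := fun σ k => if σ k then τu k else τl k
  have hτσ : ∀ σ k, τσ σ k = τl k ∨ τσ σ k = τu k := by
    intro σ k; dsimp only [τσ]; split_ifs <;> simp
  choose c hc hcb using fun σ => posdef_coercive (hLMI (τσ σ) (hτσ σ))
  obtain ⟨σ0, hσ0⟩ := Finite.exists_min c
  refine ⟨c σ0, hc σ0, fun t τt hτ hd => ?_⟩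
  set ζ := zetz m n N (by omega) z t τl τu τt with hζ
  let η1 : Fin m → kp m n N → ℝ := fun k c => -(OmL z zd (segA m t τl τu τt 0 k) (coefM m τl τu τt 0 k) c.1 c.2)
  let ηA : Fin m → kp m n N → ℝ := fun k c => -(OmL z zd (segA m t τl τu τt 1 k) (coefM m τl τu τt 1 k) c.1 c.2)
  let ηB : Fin m → kp m n N → ℝ := fun k c => -(OmL z zd (segA m t τl τu τt 2 k) (coefM m τl τu τt 2 k) c.1 c.2)
  have hex : ∀ k, ∃ b : Bool, VkD z zd (P k) (Q1 k) (Q2 k) (R1 k) (R2 k) (τl k) (τu k) t ≤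
      TK m n r N A adj B K τl τu (if b then τu else τl) P Q1 Q2 R1 R2 W1 W2 W3 Y ζ k (η1 k)
        (if b then ηA k else ηB k) := by
    intro k
    have hk := key_ineq m n r N (by omega) hN A adj B K τl τu τt P Q1 Q2 R1 R2 W1 W2 W3 Y z zd t hz hzd hd
      hW1 hW2 hW3 hRW1 hRW2 hRW3 k (hτ k).1 (hτ k).2.1 (hτ k).2.2 τu τl rfl rfl
    have hne := tau_lt m n r N hm hn A adj B K τl τu P Q1 Q2 R1 R2 W1 W2 W3 Y (hLMI τl fun k => Or.inl rfl) k
    have hlt : 0 < τu k - τl k := by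
      have := (hτ k).2.1; have := (hτ k).2.2
      have : τl k ≠ τu k := hne.symm
      have := lt_of_le_of_ne (by linarith : τl k ≤ τu k) this
      linarith
    by_contra hcon
    push Not at hcon
    have hT := hcon true
    have hF := hcon false
    simp only [if_true, Bool.false_eq_true, if_false] at hT hF
    have a1 : 0 ≤ τt k - τl k := by linarith [(hτ k).2.1]
    have a2 : 0 ≤ τu k - τt k := by linarith [(hτ k).2.2]
    have i1 := mul_le_mul_of_nonneg_left hT.le a1
    have i2 := mul_le_mul_of_nonneg_left hF.le a2
    rcases a1.lt_or_eq with h | h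
    · have i3 := mul_lt_mul_of_pos_left hT h
      have := hk.trans_lt (add_lt_add_of_lt_of_le i3 i2)
      linarith
    · have h' : 0 < τu k - τt k := by linarith
      have i3 := mul_lt_mul_of_pos_left hF h'
      have := hk.trans_lt (add_lt_add_of_le_of_lt i1 i3)
      linarith
  choose σ hσ using hex
  let η2 : Fin m → kp m n N → ℝ := fun k => if σ k then ηA k else ηB k
  have hq := LMI_quad m n r N A adj B K τl τu (τσ σ) P Q1 Q2 R1 R2 W1 W2 W3 Y ζ η1 η2
  have hco := hcb σ (Sum.elim ζ (Sum.elim (fun c => η1 c.1 c.2) (fun c => η2 c.1 c.2)))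
  rw [neg_mulVec, dotProduct_neg, hq] at hco
  have hn' : ‖ζ‖ ≤ ‖(Sum.elim ζ (Sum.elim (fun c : Fin m × kp m n N => η1 c.1 c.2) (fun c : Fin m × kp m n N => η2 c.1 c.2)) : _ → ℝ)‖ := by
    refine (pi_norm_le_iff_of_nonneg (norm_nonneg _)).2 fun i => ?_
    exact norm_le_pi_norm (Sum.elim ζ (Sum.elim (fun c : Fin m × kp m n N => η1 c.1 c.2) (fun c : Fin m × kp m n N => η2 c.1 c.2)) : _ → ℝ) (Sum.inl i)
  have hsum : ∑ k, VkD z zd (P k) (Q1 k) (Q2 k) (R1 k) (R2 k) (τl k) (τu k) t ≤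
      ∑ k, TK m n r N A adj B K τl τu (τσ σ) P Q1 Q2 R1 R2 W1 W2 W3 Y ζ k (η1 k) (η2 k) := by
    refine Finset.sum_le_sum fun k _ => (hσ k).trans (le_of_eq ?_)
    apply TK_congr
    dsimp only [τσ]
    split_ifs <;> rfl
  have h3 : c σ0 * ‖ζ‖ ^ 2 ≤ c σ * ‖(Sum.elim ζ (Sum.elim (fun c : Fin m × kp m n N => η1 c.1 c.2) (fun c : Fin m × kp m n N => η2 c.1 c.2)) : _ → ℝ)‖ ^ 2 := by
    have := hσ0 σ
    have := (hc σ).le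
    gcongr
  linarith

lemma Gsum (m : ℕ) (hm : 2 ≤ m) (i : Fin (m-1)) (f : Fin m → ℝ) :
    ∑ k, Gm m i k * f k = f ⟨0, by omega⟩ - f ⟨(i:ℕ)+1, by omega⟩ := by
  have hne : (⟨0, by omega⟩ : Fin m) ≠ ⟨(i:ℕ)+1, by omega⟩ := by simp [Fin.ext_iff]
  rw [Finset.sum_eq_add_of_mem _ _ (Finset.mem_univ _) (Finset.mem_univ _) hne]
  · simp [Gm]; ring
  · rintro ⟨k, hk⟩ _ ⟨h1, h2⟩
    have h1' : k ≠ 0 := fun h => h1 (Fin.ext h)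
    have h2' : k ≠ (i:ℕ) + 1 := fun h => h2 (Fin.ext h)
    simp [Gm, h1', h2']

lemma Lap_sum (m : ℕ) (adj : Fin m → Fin m → ℝ) (k : Fin m) (f : Fin m → ℝ) (c : ℝ) :
    ∑ l, Lap m adj k l * (f l - c) = ∑ l ∈ Finset.univ.erase k, adj k l * (f k - f l) := by
  rw [← Finset.add_sum_erase _ _ (Finset.mem_univ k)]
  have : ∑ l ∈ Finset.univ.erase k, Lap m adj k l * (f l - c) =
      ∑ l ∈ Finset.univ.erase k, -(adj k l) * (f l - c) := by
    refine Finset.sum_congr rfl fun l hl => ?_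
    rw [Lap, if_neg (Finset.ne_of_mem_erase hl).symm]
  rw [this, Lap, if_pos rfl, Finset.sum_mul, ← Finset.sum_add_distrib]
  exact Finset.sum_congr rfl fun l _ => by ring

lemma Usum (m : ℕ) (hm : 2 ≤ m) (l : Fin m) (f : Fin m → ℝ) :
    ∑ j, Um m l j * (f ⟨0, by omega⟩ - f ⟨(j:ℕ)+1, by omega⟩) = f l - f ⟨0, by omega⟩ := by
  obtain ⟨l, hl⟩ := l
  rcases l with _ | l
  · simp [Um]
  · rw [Finset.sum_eq_single ⟨l, by omega⟩]
    · simp [Um]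
    · rintro ⟨j, hj⟩ _ h
      have : ¬ l = j := fun h' => h (Fin.ext h'.symm)
      simp [Um, this]
    · simp

def zx (m n : ℕ) (hm : 2 ≤ m) (x : Fin m → ℝ → Fin n → ℝ) (t : ℝ) : ag m n → ℝ := fun c =>
  x ⟨0, by omega⟩ t c.2 - x ⟨(c.1:ℕ)+1, by omega⟩ t c.2

lemma GELU (m : ℕ) (adj : Fin m → Fin m → ℝ) (k : Fin m) (i j : Fin (m-1)) :
    (Gm m * Em m k * Lap m adj * Um m) i j = Gm m i k * (Lap m adj * Um m) k j := by
  have h : ∀ l, (Gm m * Em m k) i l = if l = k then Gm m i k else 0 := by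
    intro l
    rw [Matrix.mul_apply]
    by_cases hl : l = k
    · simp [Em, hl]
    · simp [Em, hl]
  rw [Matrix.mul_assoc, Matrix.mul_apply]
  simp [h]

lemma Bbar_z (m n r : ℕ) (hm : 2 ≤ m) (adj : Fin m → Fin m → ℝ) (B : Matrix (Fin n) (Fin r) ℝ)
    (K : Matrix (Fin r) (Fin n) ℝ) (k : Fin m) (x : Fin m → ℝ → Fin n → ℝ) (s : ℝ)
    (i : Fin (m-1)) (a : Fin n) :
    (Bbar m n r adj B K k *ᵥ zx m n hm x s) (i, a) =
      -(Gm m i k * (B.mulVec (uCtrl m n r K adj x k s)) a) := by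
  have h1 : ∀ b, ∑ j, (Lap m adj * Um m) k j * zx m n hm x s (j, b) =
      ∑ l ∈ Finset.univ.erase k, adj k l * (x k s b - x l s b) := by
    intro b
    rw [← Lap_sum m adj k (fun l => x l s b) (x ⟨0, by omega⟩ s b)]
    simp only [Matrix.mul_apply, Finset.sum_mul]
    rw [Finset.sum_comm]
    refine Finset.sum_congr rfl fun l _ => ?_
    rw [← Usum m hm l (fun l => x l s b), Finset.mul_sum]
    exact Finset.sum_congr rfl fun j _ => by rw [mul_assoc]; rfl
  have h2 : uCtrl m n r K adj x k s = -(K *ᵥ fun b => ∑ l ∈ Finset.univ.erase k, adj k l * (x k s b - x l s b)) := by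
    unfold uCtrl
    congr 1
    have : (fun b => ∑ l ∈ Finset.univ.erase k, adj k l * (x k s b - x l s b)) =
      ∑ l ∈ Finset.univ.erase k, adj k l • (x k s - x l s) := by
      funext b; simp
    rw [this, mulVec_sum]
    simp only [mulVec_smul]
  rw [h2, mulVec_neg, mulVec_mulVec, Pi.neg_apply, mul_neg, neg_neg]
  simp only [mulVec, dotProduct, Bbar, Fintype.sum_prod_type, kroneckerMap_apply, GELU, ← h1]
  rw [Finset.sum_comm, Finset.mul_sum]
  refine Finset.sum_congr rfl fun b _ => ?_
  rw [Finset.mul_sum, Finset.mul_sum]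
  exact Finset.sum_congr rfl fun j _ => by ring

lemma Abar_z (m n : ℕ) (hm : 2 ≤ m) (A : Matrix (Fin n) (Fin n) ℝ) (x : Fin m → ℝ → Fin n → ℝ) (s : ℝ)
    (i : Fin (m-1)) (a : Fin n) :
    (Abar m n A *ᵥ zx m n hm x s) (i, a) =
      (A *ᵥ x ⟨0, by omega⟩ s) a - (A *ᵥ x ⟨(i:ℕ)+1, by omega⟩ s) a := by
  simp only [mulVec, dotProduct, Abar, Fintype.sum_prod_type, kroneckerMap_apply, zx]
  rw [Finset.sum_eq_single i]
  · simp only [Matrix.one_apply_eq, one_mul, mul_sub, Finset.sum_sub_distrib]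
  · intro j _ h
    simp [Matrix.one_apply_ne h.symm]
  · simp

lemma zx_deriv (m n r : ℕ) (hm : 2 ≤ m) 
    (A : Matrix (Fin n) (Fin n) ℝ) (B : Matrix (Fin n) (Fin r) ℝ)
    (K : Matrix (Fin r) (Fin n) ℝ) (adj : Fin m → Fin m → ℝ) (τ : Fin m → ℝ → ℝ)
    (x : Fin m → ℝ → Fin n → ℝ)
    (hdyn : ∀ (k : Fin m) (t : ℝ), HasDerivAt (x k)
      (A.mulVec (x k t) + B.mulVec (uCtrl m n r K adj x k (t - τ k t))) t) (p : ag m n) (t : ℝ) :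
    HasDerivAt (fun s => zx m n hm x s p)
      ((Abar m n A *ᵥ zx m n hm x t - ∑ k, Bbar m n r adj B K k *ᵥ zx m n hm x (t - τ k t)) p) t := by
  obtain ⟨i, a⟩ := p
  have h0 := (hasDerivAt_pi.1 (hdyn ⟨0, by omega⟩ t)) a
  have h1 := (hasDerivAt_pi.1 (hdyn ⟨(i:ℕ)+1, by omega⟩ t)) a
  have h2 := h0.sub h1
  refine HasDerivAt.congr_deriv h2 ?_
  symm
  rw [Pi.sub_apply, Finset.sum_apply, Abar_z]
  simp only [Bbar_z, Finset.sum_neg_distrib]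
  rw [Gsum m hm i (fun k => (B *ᵥ uCtrl m n r K adj x k (t - τ k t)) a)]
  simp only [Pi.add_apply]
  ring

lemma z_tendsto (m n r N : ℕ) (hm : 2 ≤ m) (hn : 1 ≤ n) (hN : 1 ≤ N)
    (A : Matrix (Fin n) (Fin n) ℝ) (adj : Fin m → Fin m → ℝ)
    (B : Matrix (Fin n) (Fin r) ℝ) (K : Matrix (Fin r) (Fin n) ℝ)
    (τl τu : Fin m → ℝ) (τ : Fin m → ℝ → ℝ)
    (hτbound : ∀ k t, 0 ≤ τl k ∧ τl k ≤ τ k t ∧ τ k t ≤ τu k)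
    (P : Fin m → Matrix (Fin 3 × ag m n) (Fin 3 × ag m n) ℝ)
    (Q1 Q2 : Fin m → Matrix (ag m n) (ag m n) ℝ)
    (R1 R2 : Fin m → Matrix (ag m n ⊕ ag m n) (ag m n ⊕ ag m n) ℝ)
    (W1 W2 W3 : Fin m → Matrix (ag m n) (ag m n) ℝ)
    (Y : Fin 3 → Fin m → Fin (2 * N + 1) → Matrix (bg m n N) (ag m n) ℝ)
    (hP : ∀ k, (P k).PosDef) (hQ1 : ∀ k, (Q1 k).PosDef) (hQ2 : ∀ k, (Q2 k).PosDef)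
    (hR1 : ∀ k, (R1 k).PosDef) (hR2 : ∀ k, (R2 k).PosDef)
    (hW1 : ∀ k, (W1 k).IsSymm) (hW2 : ∀ k, (W2 k).IsSymm) (hW3 : ∀ k, (W3 k).IsSymm)
    (hRW1 : ∀ k, (R1 k + Wb m n (W1 k)).PosDef)
    (hRW2 : ∀ k, (R2 k + Wb m n (W2 k)).PosDef)
    (hRW3 : ∀ k, (R2 k + Wb m n (W3 k)).PosDef)
    (hLMI : ∀ τv : Fin m → ℝ, (∀ k, τv k = τl k ∨ τv k = τu k) →
      (-(LMImat m n r N A adj B K τl τu τv P Q1 Q2 R1 R2 W1 W2 W3 Y)).PosDef)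
    (z zd : ℝ → ag m n → ℝ)
    (hz : ∀ a t, HasDerivAt (fun s => z s a) (zd t a) t)
    (hzd : ∀ a, Continuous fun s => zd s a)
    (hdd : ∀ t, zd t = Abar m n A *ᵥ z t - ∑ k, Bbar m n r adj B K k *ᵥ z (t - τ k t))
    (p : ag m n) : Filter.Tendsto (fun t => z t p) Filter.atTop (nhds 0) := by
  obtain ⟨c, hc, hb⟩ := vdot_bound m n r N hm hn hN A adj B K τl τu P Q1 Q2 R1 R2 W1 W2 W3 Y
    hW1 hW2 hW3 hRW1 hRW2 hRW3 hLMI z zd hz hzd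
  have hm0 : 0 < m := by omega
  have hdyn : ∀ t, zetz m n N hm0 z t τl τu (fun k => τ k t) ᵥ* dynRow m n r N A adj B K = zd t := by
    intro t; rw [zetz_dyn, hdd]
  have hbt := fun t => hb t (fun k => τ k t) (fun k => hτbound k t) (hdyn t)
  set Z : ℝ → ℝ := fun t => ‖zetz m n N hm0 z t τl τu (fun k => τ k t)‖ with hZ
  have hZ0 : ∀ t, 0 ≤ Z t := fun t => norm_nonneg _
  have hzb : ∀ t, |z t p| ≤ Z t := by
    intro t
    have := norm_le_pi_norm (zetz m n N hm0 z t τl τu (fun k => τ k t)) (⟨0, by omega⟩, p)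
    simpa [zetz, zet, hZ] using this
  let C : ℝ := ∑ q, |dynRow m n r N A adj B K q p|
  have hC : 0 ≤ C := Finset.sum_nonneg fun _ _ => abs_nonneg _
  have hzdb : ∀ t, |zd t p| ≤ C * Z t := by
    intro t
    rw [← hdyn t]
    simp only [vecMul, dotProduct]
    refine (Finset.abs_sum_le_sum_abs _ _).trans ?_
    rw [Finset.sum_mul]
    refine Finset.sum_le_sum fun q _ => ?_
    rw [abs_mul, mul_comm]
    exact mul_le_mul_of_nonneg_left (norm_le_pi_norm (zetz m n N hm0 z t τl τu (fun k => τ k t)) q) (abs_nonneg _)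
  have hV : ∀ t, HasDerivAt (fun t => ∑ k, VkF z zd (P k) (Q1 k) (Q2 k) (R1 k) (R2 k) (τl k) (τu k) t)
      (∑ k, VkD z zd (P k) (Q1 k) (Q2 k) (R1 k) (R2 k) (τl k) (τu k) t) t := fun t =>
    HasDerivAt.fun_sum fun k _ => VkF_deriv z zd hz hzd (P k) (posdef_symm (hP k)) _ _ _ _ _ _ t
  have hg : ∀ t, HasDerivAt (fun t => z t p ^ 2) (2 * (z t p * zd t p)) t := by
    intro t
    refine HasDerivAt.congr_deriv ((hz p t).pow 2) ?_
    push_cast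
    ring
  have hden : 0 < 1 + 2 * C := by linarith
  have hmain := scalar_conv _ _ (fun t => z t p ^ 2) _ (c / (1 + 2 * C)) (by positivity) hV hg
    (fun t => Finset.sum_nonneg fun k _ => VkF_nonneg z zd (P k) (hP k) _ _ (hQ1 k) (hQ2 k) _ _ (hR1 k) (hR2 k)
      _ _ t (hτbound k t).1 ((hτbound k t).2.1.trans (hτbound k t).2.2))
    (fun t => sq_nonneg _)
    (fun t => by
      refine (hbt t).trans (neg_le_neg ?_)
      have e : z t p ^ 2 ≤ (1 + 2 * C) * Z t ^ 2 := by
        have : z t p ^ 2 ≤ Z t ^ 2 := by rw [← sq_abs]; exact pow_le_pow_left₀ (abs_nonneg _) (hzb t) 2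
        nlinarith [sq_nonneg (Z t), mul_nonneg hC (sq_nonneg (Z t))]
      rw [div_mul_eq_mul_div, div_le_iff₀ hden]
      calc c * z t p ^ 2 ≤ c * ((1 + 2 * C) * Z t ^ 2) := mul_le_mul_of_nonneg_left e hc.le
        _ = c * Z t ^ 2 * (1 + 2 * C) := by ring)
    (fun t => by
      refine (hbt t).trans (neg_le_neg ?_)
      have e : |2 * (z t p * zd t p)| ≤ (1 + 2 * C) * Z t ^ 2 := by
        rw [abs_mul, abs_mul, abs_two]
        have : |z t p| * |zd t p| ≤ Z t * (C * Z t) :=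
          mul_le_mul (hzb t) (hzdb t) (abs_nonneg _) (hZ0 t)
        nlinarith [sq_nonneg (Z t)]
      rw [div_mul_eq_mul_div, div_le_iff₀ hden]
      calc c * |2 * (z t p * zd t p)| ≤ c * ((1 + 2 * C) * Z t ^ 2) := mul_le_mul_of_nonneg_left e hc.le
        _ = c * Z t ^ 2 * (1 + 2 * C) := by ring)
  have h2 := hmain.sqrt
  simp only [Real.sqrt_sq_eq_abs, Real.sqrt_zero] at h2
  exact (tendsto_zero_iff_abs_tendsto_zero _).2 h2

/-- **Theorem 1** (individual-delay-reflected consensus criterion): if for each agent `k`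
there exist `P_k ≻ 0`, `Q_{1k}, Q_{2k} ≻ 0`, `R_{1k}, R_{2k} ≻ 0`, symmetric
`W_{1k}, W_{2k}, W_{3k}` and free matrices `Y_{ikj}` such that
`R_{1k}+W̄_{1k} ≻ 0`, `R_{2k}+W̄_{2k} ≻ 0`, `R_{2k}+W̄_{3k} ≻ 0` and the LMI block matrix
is negative definite at all `2^m` vertices of the delay box, then the delayed multi-agent
system achieves consensus: `x_i(t) − x_j(t) → 0` as `t → ∞` for all agents `i, j`. -/
theorem theorem1_consensus (m n r N : ℕ) (hm : 2 ≤ m) (hn : 1 ≤ n) (hN : 1 ≤ N)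
    (A : Matrix (Fin n) (Fin n) ℝ) (B : Matrix (Fin n) (Fin r) ℝ)
    (K : Matrix (Fin r) (Fin n) ℝ) (adj : Fin m → Fin m → ℝ)
    (τl τu : Fin m → ℝ) (τ : Fin m → ℝ → ℝ)
    (hτcont : ∀ k, Continuous (τ k))
    (hτbound : ∀ k t, 0 ≤ τl k ∧ τl k ≤ τ k t ∧ τ k t ≤ τu k)
    (x : Fin m → ℝ → Fin n → ℝ)
    (hdyn : ∀ (k : Fin m) (t : ℝ), HasDerivAt (x k)
      (A.mulVec (x k t) + B.mulVec (uCtrl m n r K adj x k (t - τ k t))) t)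
    (P : Fin m → Matrix (Fin 3 × ag m n) (Fin 3 × ag m n) ℝ)
    (Q1 Q2 : Fin m → Matrix (ag m n) (ag m n) ℝ)
    (R1 R2 : Fin m → Matrix (ag m n ⊕ ag m n) (ag m n ⊕ ag m n) ℝ)
    (W1 W2 W3 : Fin m → Matrix (ag m n) (ag m n) ℝ)
    (Y : Fin 3 → Fin m → Fin (2 * N + 1) → Matrix (bg m n N) (ag m n) ℝ)
    (hP : ∀ k, (P k).PosDef) (hQ1 : ∀ k, (Q1 k).PosDef) (hQ2 : ∀ k, (Q2 k).PosDef)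
    (hR1 : ∀ k, (R1 k).PosDef) (hR2 : ∀ k, (R2 k).PosDef)
    (hW1 : ∀ k, (W1 k).IsSymm) (hW2 : ∀ k, (W2 k).IsSymm) (hW3 : ∀ k, (W3 k).IsSymm)
    (hRW1 : ∀ k, (R1 k + Wb m n (W1 k)).PosDef)
    (hRW2 : ∀ k, (R2 k + Wb m n (W2 k)).PosDef)
    (hRW3 : ∀ k, (R2 k + Wb m n (W3 k)).PosDef)
    (hLMI : ∀ τv : Fin m → ℝ, (∀ k, τv k = τl k ∨ τv k = τu k) →
      (-(LMImat m n r N A adj B K τl τu τv P Q1 Q2 R1 R2 W1 W2 W3 Y)).PosDef) :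
    ∀ i j : Fin m,
      Filter.Tendsto (fun t => x i t - x j t) Filter.atTop (nhds (0 : Fin n → ℝ)) := by
  have hxc : ∀ k a, Continuous fun t => x k t a := fun k a =>
    continuous_iff_continuousAt.2 fun t => ((hasDerivAt_pi.1 (hdyn k t)) a).continuousAt
  have hzc : ∀ p, Continuous fun t => zx m n hm x t p := fun p => (hxc _ _).sub (hxc _ _)
  have hzt := z_tendsto m n r N hm hn hN A adj B K τl τu τ hτbound P Q1 Q2 R1 R2 W1 W2 W3 Y
    hP hQ1 hQ2 hR1 hR2 hW1 hW2 hW3 hRW1 hRW2 hRW3 hLMI (zx m n hm x)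
    (fun t => Abar m n A *ᵥ zx m n hm x t - ∑ k, Bbar m n r adj B K k *ᵥ zx m n hm x (t - τ k t))
    (fun p t => zx_deriv m n r hm A B K adj τ x hdyn p t)
    (fun p => by
      simp only [Pi.sub_apply, Finset.sum_apply, mulVec, dotProduct]
      refine Continuous.sub (continuous_finsetSum _ fun q _ => continuous_const.mul (hzc q))
        (continuous_finsetSum _ fun k _ => continuous_finsetSum _ fun q _ =>
          continuous_const.mul ((hzc q).comp (continuous_id.sub (hτcont k)))))
    (fun t => rfl)
  have h0 : ∀ (i : Fin m) (a : Fin n),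
      Filter.Tendsto (fun t => x ⟨0, by omega⟩ t a - x i t a) Filter.atTop (nhds 0) := by
    rintro ⟨i, hi⟩ a
    rcases i with _ | i
    · simp
    · exact hzt (⟨i, by omega⟩, a)
  intro i j
  rw [tendsto_pi_nhds]
  intro a
  have := (h0 j a).sub (h0 i a)
  simp only [sub_sub_sub_cancel_left, sub_zero] at this
  exact this
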